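/- For every K > 0 there exists a constant α > 0 depending only on K with the following property. For all positive integers n, m, d₁, d₂ with n·d₁ = m·d₂, d₁ ≥ d₂, d₂ ≤ (1/2)·n^{2/3}, and 𝒢(n,m,d₁,d₂) nonempty, if A is the adjacency matrix of a uniform random (n,m,d₁,d₂)-bipartite biregular graph, then ℙ(λ₂(A) ≤ α·√d₁) ≥ 1 − m^{−K} − e^{−m}, where λ₂(A) is the second largest eigenvalue of A (eigenvalues counted with multiplicity). -/

import Mathlib

open scoped Classical BigOperators

noncomputable section

/-- The set of biadjacency matrices of `(n,m,d₁,d₂)`-bipartite biregular graphs: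
0-1 matrices with all row sums `d₁` and all column sums `d₂`. -/
def BBG (n m d₁ d₂ : ℕ) : Finset (Fin n → Fin m → Bool) :=
  Finset.univ.filter fun X =>
    (∀ u, (∑ v, if X u v then 1 else 0) = d₁) ∧
    (∀ v, (∑ u, if X u v then 1 else 0) = d₂)

/-- The biadjacency matrix as a real matrix. -/
def biadj {n m : ℕ} (X : Fin n → Fin m → Bool) : Matrix (Fin n) (Fin m) ℝ :=
  Matrix.of fun u v => if X u v then (1 : ℝ) else 0

/-- The adjacency matrix `A = [[0, X],[Xᵀ,0]]` of the bipartite graph. -/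
def adj {n m : ℕ} (X : Fin n → Fin m → Bool) :
    Matrix (Fin n ⊕ Fin m) (Fin n ⊕ Fin m) ℝ :=
  Matrix.fromBlocks 0 (biadj X) (biadj X).transpose 0

/-!
The argument follows Kahn and Szemerédi. The top two eigenvectors of `adj X` span a vector `(x, y)`
orthogonal to the Perron eigenvector, so it is enough to bound the form `2 xᵀ A y`, `A = biadj X`,
on such vectors, and then, up to a constant, on a net of size exponential in `m` of vectors whose
halves both have mean zero.

For fixed `(x, y)` split the entries of the matrix `x u * y v` at height `√d₁ / m`. The sum of the
light entries over the edges has an exponential moment which is controlled by switchings: under the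
uniform measure tilted by `exp (θ f)`, the double counting of the switchings `X ↔ X'` bounds the
mean of `f` by its variance under a random switching, so that Chernoff's bound beats the size of the
net. The heavy entries need no union bound over the net. With probability at least `1 - m ^ (-K)`
the number of edges between any two sets of vertices is at most a constant times its mean, or else
its excess is logarithmically suppressed, and a dyadic decomposition of `x` and `y` into level sets
turns this discrepancy property into a bound `O(√d₁)` that holds for all `x`, `y` at once.
-/

/-! ### Biregular matrices -/

section Biregular

open Matrix

variable {α β : Type*}

/-- For a 0-1 matrix `A`, the indicator that the edges `uv`, `ab` can be switched to the non-edges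
`ub`, `av`. It is written as a polynomial in the entries so that its sums can be evaluated. -/
def switchWeight (A : Matrix α β ℝ) (u : α) (v : β) (a : α) (b : β) : ℝ :=
  A u v * A a b * (1 - A u b) * (1 - A a v)

/-- The amount by which `frobeniusInner Q` drops when the edges `uv`, `ab` are switched to `ub`,
`av`. -/
def mixedDiff (Q : Matrix α β ℝ) (u : α) (v : β) (a : α) (b : β) : ℝ :=
  Q u v + Q a b - Q u b - Q a v

lemma switchWeight_swap (A : Matrix α β ℝ) (u : α) (v : β) (a : α) (b : β) :
    switchWeight A u v a b = switchWeight A a b u v := by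
  unfold switchWeight
  ring

lemma mixedDiff_le {Q : Matrix α β ℝ} {q : ℝ} (hQ : ∀ u v, |Q u v| ≤ q) (u : α) (v : β) (a : α)
    (b : β) : mixedDiff Q u v a b ≤ 4 * q := by
  have := abs_le.1 (hQ u v)
  have := abs_le.1 (hQ a b)
  have := abs_le.1 (hQ u b)
  have := abs_le.1 (hQ a v)
  unfold mixedDiff
  linarith

lemma sq_mixedDiff_le (Q : Matrix α β ℝ) (u : α) (v : β) (a : α) (b : β) :
    mixedDiff Q u v a b ^ 2 ≤ 4 * (Q u v ^ 2 + Q a b ^ 2 + Q u b ^ 2 + Q a v ^ 2) := by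
  unfold mixedDiff
  nlinarith [sq_nonneg (Q u v - Q a b), sq_nonneg (Q u v + Q u b), sq_nonneg (Q u v + Q a v),
    sq_nonneg (Q a b + Q u b), sq_nonneg (Q a b + Q a v), sq_nonneg (Q u b - Q a v)]

variable [Fintype α] [Fintype β]

/-- A real matrix is `(r, c)`-biregular if all its rows sum to `r` and all its columns to `c`. -/
structure IsBiregular (A : Matrix α β ℝ) (r c : ℝ) : Prop where
  sum_row (u : α) : ∑ v, A u v = r
  sum_col (v : β) : ∑ u, A u v = c

/-- The Frobenius inner product of two real matrices. -/
def frobeniusInner (Q A : Matrix α β ℝ) : ℝ :=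
  ∑ u, ∑ v, Q u v * A u v

lemma mul_transpose_mul_apply (A : Matrix α β ℝ) (u : α) (v : β) :
    (A * Aᵀ * A) u v = ∑ a, ∑ b, A u b * A a b * A a v := by
  simp only [mul_apply, transpose_apply, Finset.sum_mul]

lemma mul_transpose_mul_nonneg {A : Matrix α β ℝ} (hA : ∀ u v, 0 ≤ A u v) (u : α) (v : β) :
    0 ≤ (A * Aᵀ * A) u v := by
  rw [mul_transpose_mul_apply]
  exact Finset.sum_nonneg fun a _ => Finset.sum_nonneg fun b _ =>
    mul_nonneg (mul_nonneg (hA u b) (hA a b)) (hA a v)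

namespace IsBiregular

variable {A : Matrix α β ℝ} {r c : ℝ}

lemma sum_sum (hA : IsBiregular A r c) : ∑ u, ∑ v, A u v = Fintype.card α * r := by
  simp [hA.sum_row]

lemma card_mul_eq_card_mul (hA : IsBiregular A r c) :
    (Fintype.card α : ℝ) * r = Fintype.card β * c := by
  rw [← hA.sum_sum]
  refine Finset.sum_comm.trans ?_
  simp [hA.sum_col]

lemma sum_mul_row (hA : IsBiregular A r c) (u : α) : ∑ a, ∑ b, A a b * A u b = r * c := by
  rw [Finset.sum_comm]
  simp only [← Finset.sum_mul, hA.sum_col]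
  rw [← Finset.mul_sum, hA.sum_row, mul_comm]

lemma sum_mul_col (hA : IsBiregular A r c) (v : β) : ∑ a, ∑ b, A a b * A a v = r * c := by
  simp only [← Finset.sum_mul, hA.sum_row]
  rw [← Finset.mul_sum, hA.sum_col]

lemma sum_row_mul_col (hA : IsBiregular A r c) (u : α) (v : β) :
    ∑ a, ∑ b, A u b * A a v = r * c := by
  simp only [← Finset.sum_mul, hA.sum_row]
  rw [← Finset.mul_sum, hA.sum_col]

lemma sum_switchWeight_edge (hA : IsBiregular A r c) (u : α) (v : β) :
    ∑ a, ∑ b, switchWeight A u v a b =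
      A u v * (Fintype.card α * r - 2 * (r * c) + (A * Aᵀ * A) u v) := by
  have expand : ∀ a b, switchWeight A u v a b = A u v *
      (A a b - A a b * A u b - A a b * A a v + A u b * A a b * A a v) := fun a b => by
    unfold switchWeight; ring
  simp only [expand, ← Finset.mul_sum, Finset.sum_add_distrib, Finset.sum_sub_distrib]
  rw [hA.sum_sum, hA.sum_mul_row, hA.sum_mul_col, mul_transpose_mul_apply]
  ring

lemma sum_switchWeight_nonedge (hA : IsBiregular A r c) (u : α) (v : β) :
    ∑ a, ∑ b, switchWeight A u b a v = (1 - A u v) * (r * c - (A * Aᵀ * A) u v) := by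
  have expand : ∀ a b, switchWeight A u b a v =
      (1 - A u v) * (A u b * A a v - A u b * A a b * A a v) := fun a b => by
    unfold switchWeight; ring
  simp only [expand, ← Finset.mul_sum, Finset.sum_sub_distrib]
  rw [hA.sum_row_mul_col, mul_transpose_mul_apply]

/-- Splits off the degenerate paths, which run through the edge `uv` itself. -/
lemma mul_transpose_mul_le [DecidableEq α] [DecidableEq β] (hA : IsBiregular A r c)
    (hidem : ∀ u v, A u v * A u v = A u v) (u : α) (v : β) :
    (A * Aᵀ * A) u v ≤ (∑ a ∈ Finset.univ.erase u, ∑ b ∈ Finset.univ.erase v,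
      A a b * (A u b * A a v)) + (r + c) * A u v := by
  have hA₀ (a : α) (b : β) : 0 ≤ A a b := by
    rw [← hidem a b]; exact mul_self_nonneg _
  have row_u : ∑ b, A u b * A u b * A u v = r * A u v := by
    simp only [hidem, ← Finset.sum_mul, hA.sum_row]
  have row (a : α) : ∑ b, A u b * A a b * A a v =
      A u v * A a v + ∑ b ∈ Finset.univ.erase v, A a b * (A u b * A a v) := by
    rw [← Finset.add_sum_erase _ _ (Finset.mem_univ v), mul_assoc, hidem]
    simp only [mul_comm (A a _), mul_right_comm]
  have col_v : ∑ a ∈ Finset.univ.erase u, A u v * A a v ≤ c * A u v := by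
    rw [← Finset.mul_sum, mul_comm, ← hA.sum_col v]
    exact mul_le_mul_of_nonneg_right (Finset.sum_le_univ_sum_of_nonneg fun a => hA₀ a v) (hA₀ u v)
  rw [mul_transpose_mul_apply, ← Finset.add_sum_erase _ _ (Finset.mem_univ u), row_u]
  simp only [row, Finset.sum_add_distrib]
  linarith

end IsBiregular

lemma sum_four_swap_pairs (g : α → β → α → β → ℝ) :
    ∑ u, ∑ v, ∑ a, ∑ b, g a b u v = ∑ u, ∑ v, ∑ a, ∑ b, g u v a b := by
  simpa only [Fintype.sum_prod_type] using
    Finset.sum_comm (s := .univ) (t := .univ) (f := fun p q : α × β => g q.1 q.2 p.1 p.2)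

lemma sum_four_swap_cols (g : α → β → α → β → ℝ) :
    ∑ u, ∑ v, ∑ a, ∑ b, g u b a v = ∑ u, ∑ v, ∑ a, ∑ b, g u v a b := by
  refine Finset.sum_congr rfl fun u _ => ?_
  rw [Finset.sum_comm]
  conv_rhs => rw [Finset.sum_comm]
  exact Finset.sum_congr rfl fun a _ => Finset.sum_comm

lemma sum_switchWeight_mul_edge (A Q : Matrix α β ℝ) :
    ∑ u, ∑ v, ∑ a, ∑ b, switchWeight A u v a b * (Q u v + Q a b) =
      2 * ∑ u, ∑ v, Q u v * ∑ a, ∑ b, switchWeight A u v a b := by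
  have second : ∑ u, ∑ v, ∑ a, ∑ b, switchWeight A u v a b * Q a b =
      ∑ u, ∑ v, ∑ a, ∑ b, switchWeight A u v a b * Q u v := by
    rw [← sum_four_swap_pairs]
    simp only [switchWeight_swap A]
  simp only [mul_add, Finset.sum_add_distrib, second]
  simp only [← Finset.sum_mul, mul_comm (Q _ _), two_mul]

lemma sum_switchWeight_mul_nonedge (A Q : Matrix α β ℝ) :
    ∑ u, ∑ v, ∑ a, ∑ b, switchWeight A u v a b * (Q u b + Q a v) =
      2 * ∑ u, ∑ v, Q u v * ∑ a, ∑ b, switchWeight A u b a v := by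
  have second : ∑ u, ∑ v, ∑ a, ∑ b, switchWeight A u v a b * Q a v =
      ∑ u, ∑ v, ∑ a, ∑ b, switchWeight A u v a b * Q u b := by
    rw [← sum_four_swap_pairs]
    simp only [switchWeight_swap A]
  simp only [mul_add, Finset.sum_add_distrib, second]
  rw [← sum_four_swap_cols fun u v a b => switchWeight A u v a b * Q u b]
  simp only [← Finset.sum_mul, mul_comm (Q _ _), two_mul]

namespace IsBiregular

variable {A : Matrix α β ℝ} {r c : ℝ}

lemma sum_switchWeight_mul_mixedDiff (hA : IsBiregular A r c) (Q : Matrix α β ℝ) :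
    ∑ u, ∑ v, ∑ a, ∑ b, switchWeight A u v a b * mixedDiff Q u v a b =
      2 * ((Fintype.card α * r - r * c) * frobeniusInner Q A - r * c * ∑ u, ∑ v, Q u v
        + frobeniusInner Q (A * Aᵀ * A)) := by
  have split (u : α) (v : β) (a : α) (b : β) : switchWeight A u v a b * mixedDiff Q u v a b =
      switchWeight A u v a b * (Q u v + Q a b) - switchWeight A u v a b * (Q u b + Q a v) := by
    unfold mixedDiff; ring
  simp only [split, Finset.sum_sub_distrib, sum_switchWeight_mul_edge,
    sum_switchWeight_mul_nonedge, hA.sum_switchWeight_edge, hA.sum_switchWeight_nonedge,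
    frobeniusInner, Finset.mul_sum]
  simp only [← Finset.sum_add_distrib, ← Finset.sum_sub_distrib]
  simp only [Finset.mul_sum]
  refine Finset.sum_congr rfl fun u _ => Finset.sum_congr rfl fun v _ => ?_
  ring

lemma sum_switchWeight_nonedge_le (hA : IsBiregular A r c) (hA₀ : ∀ u v, 0 ≤ A u v)
    (hA₁ : ∀ u v, A u v ≤ 1) (u : α) (v : β) : ∑ a, ∑ b, switchWeight A u b a v ≤ r * c := by
  have hrc : 0 ≤ r * c := by
    rw [← hA.sum_row_mul_col u v]
    exact Finset.sum_nonneg fun a _ => Finset.sum_nonneg fun b _ => mul_nonneg (hA₀ u b) (hA₀ a v)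
  rw [hA.sum_switchWeight_nonedge]
  nlinarith [mul_transpose_mul_nonneg hA₀ u v, hA₀ u v, hA₁ u v]

lemma sum_switchWeight_edge_le (hA : IsBiregular A r c) (hA₀ : ∀ u v, 0 ≤ A u v)
    (hA₁ : ∀ u v, A u v ≤ 1) (u : α) (v : β) :
    ∑ a, ∑ b, switchWeight A u v a b ≤ A u v * (Fintype.card α * r) := by
  simp only [← hA.sum_sum, Finset.mul_sum]
  refine Finset.sum_le_sum fun a _ => Finset.sum_le_sum fun b _ => ?_
  rw [switchWeight, mul_assoc]
  exact mul_le_of_le_one_right (mul_nonneg (hA₀ u v) (hA₀ a b))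
    (mul_le_one₀ (by linarith [hA₀ u b]) (by linarith [hA₁ a v]) (by linarith [hA₀ a v]))

lemma sum_switchWeight_mul_sq_mixedDiff_le (hA : IsBiregular A r c) (hA₀ : ∀ u v, 0 ≤ A u v)
    (hA₁ : ∀ u v, A u v ≤ 1) (Q : Matrix α β ℝ) :
    ∑ u, ∑ v, ∑ a, ∑ b, switchWeight A u v a b * mixedDiff Q u v a b ^ 2 ≤
      8 * (Fintype.card α * r) * frobeniusInner (Matrix.of fun u v => Q u v ^ 2) A
        + 8 * (r * c) * ∑ u, ∑ v, Q u v ^ 2 := by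
  set R : Matrix α β ℝ := Matrix.of fun u v => Q u v ^ 2
  have pointwise (u : α) (v : β) (a : α) (b : β) :
      switchWeight A u v a b * mixedDiff Q u v a b ^ 2 ≤
      4 * (switchWeight A u v a b * (R u v + R a b))
        + 4 * (switchWeight A u v a b * (R u b + R a v)) := by
    have hS : 0 ≤ switchWeight A u v a b :=
      mul_nonneg (mul_nonneg (mul_nonneg (hA₀ u v) (hA₀ a b)) (sub_nonneg.2 (hA₁ u b)))
        (sub_nonneg.2 (hA₁ a v))
    have := mul_le_mul_of_nonneg_left (sq_mixedDiff_le Q u v a b) hS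
    simp only [R, Matrix.of_apply]
    linarith
  have edge : ∑ u, ∑ v, R u v * ∑ a, ∑ b, switchWeight A u v a b ≤
      (Fintype.card α * r) * frobeniusInner R A := by
    simp only [frobeniusInner, Finset.mul_sum (a := Fintype.card α * r)]
    refine Finset.sum_le_sum fun u _ => Finset.sum_le_sum fun v _ => ?_
    rw [mul_left_comm, mul_comm _ (A u v)]
    exact mul_le_mul_of_nonneg_left (hA.sum_switchWeight_edge_le hA₀ hA₁ u v) (sq_nonneg _)
  have nonedge : ∑ u, ∑ v, R u v * ∑ a, ∑ b, switchWeight A u b a v ≤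
      (r * c) * ∑ u, ∑ v, R u v := by
    simp only [Finset.mul_sum (a := r * c), mul_comm (r * c)]
    exact Finset.sum_le_sum fun u _ => Finset.sum_le_sum fun v _ =>
      mul_le_mul_of_nonneg_left (hA.sum_switchWeight_nonedge_le hA₀ hA₁ u v) (sq_nonneg _)
  refine (Finset.sum_le_sum fun u _ => Finset.sum_le_sum fun v _ => Finset.sum_le_sum fun a _ =>
    Finset.sum_le_sum fun b _ => pointwise u v a b).trans ?_
  simp only [Finset.sum_add_distrib, ← Finset.mul_sum, sum_switchWeight_mul_edge,
    sum_switchWeight_mul_nonedge]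
  have sum_R : ∑ u, ∑ v, Q u v ^ 2 = ∑ u, ∑ v, R u v := rfl
  rw [sum_R]
  linarith

end IsBiregular

end Biregular

/-! ### Switchings of biregular graphs -/

section Switching

variable {n m d₁ d₂ : ℕ}

lemma biadj_apply (X : Fin n → Fin m → Bool) (u : Fin n) (v : Fin m) :
    biadj X u v = if X u v then 1 else 0 := rfl

lemma biadj_nonneg (X : Fin n → Fin m → Bool) (u : Fin n) (v : Fin m) : 0 ≤ biadj X u v := by
  rw [biadj_apply]; split_ifs <;> norm_num

lemma biadj_le_one (X : Fin n → Fin m → Bool) (u : Fin n) (v : Fin m) : biadj X u v ≤ 1 := by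
  rw [biadj_apply]; split_ifs <;> norm_num

lemma mem_BBG_iff {X : Fin n → Fin m → Bool} :
    X ∈ BBG n m d₁ d₂ ↔ IsBiregular (biadj X) d₁ d₂ := by
  have cast_row (u : Fin n) : (∑ v, if X u v then 1 else 0) = d₁ ↔ ∑ v, biadj X u v = d₁ := by
    rw [← Nat.cast_inj (R := ℝ)]
    simp [biadj_apply]
  have cast_col (v : Fin m) : (∑ u, if X u v then 1 else 0) = d₂ ↔ ∑ u, biadj X u v = d₂ := by
    rw [← Nat.cast_inj (R := ℝ)]
    simp [biadj_apply]
  simp only [BBG, Finset.mem_filter_univ, cast_row, cast_col]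
  exact ⟨fun h => ⟨h.1, h.2⟩, fun h => ⟨h.1, h.2⟩⟩

/-- The switching of the edges `uv`, `ab` to `ub`, `av`: all four entries are toggled, so that it
is an involution on all of `{0,1}^{n×m}`. -/
def switch (u : Fin n) (v : Fin m) (a : Fin n) (b : Fin m) (X : Fin n → Fin m → Bool) :
    Fin n → Fin m → Bool :=
  fun i j => if (i = u ∨ i = a) ∧ (j = v ∨ j = b) then !(X i j) else X i j

/-- The edges `uv`, `ab` of `X` can be switched to the non-edges `ub`, `av`. -/
structure IsSwitchable (u : Fin n) (v : Fin m) (a : Fin n) (b : Fin m)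
    (X : Fin n → Fin m → Bool) : Prop where
  edge : X u v = true
  edge' : X a b = true
  nonedge : X u b = false
  nonedge' : X a v = false

lemma switch_switch (u : Fin n) (v : Fin m) (a : Fin n) (b : Fin m)
    (X : Fin n → Fin m → Bool) : switch u v a b (switch u v a b X) = X := by
  funext i j
  unfold switch
  split_ifs <;> simp

lemma switch_comm (u : Fin n) (v : Fin m) (a : Fin n) (b : Fin m) :
    switch u b a v = switch u v a b := by
  funext X i j
  simp only [switch, or_comm]

lemma switchWeight_biadj (u : Fin n) (v : Fin m) (a : Fin n) (b : Fin m)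
    (X : Fin n → Fin m → Bool) :
    switchWeight (biadj X) u v a b = if IsSwitchable u v a b X then 1 else 0 := by
  have : IsSwitchable u v a b X ↔ X u v = true ∧ X a b = true ∧ X u b = false ∧ X a v = false :=
    ⟨fun h => ⟨h.1, h.2, h.3, h.4⟩, fun h => ⟨h.1, h.2.1, h.2.2.1, h.2.2.2⟩⟩
  rw [this]
  unfold switchWeight
  simp only [biadj_apply]
  cases X u v <;> cases X a b <;> cases X u b <;> cases X a v <;> simp

namespace IsSwitchable

variable {u a : Fin n} {v b : Fin m} {X : Fin n → Fin m → Bool}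

lemma ne_left (h : IsSwitchable u v a b X) : u ≠ a := by
  rintro rfl
  simpa [h.edge] using h.nonedge'

lemma ne_right (h : IsSwitchable u v a b X) : v ≠ b := by
  rintro rfl
  simpa [h.edge] using h.nonedge

lemma reverse (h : IsSwitchable u v a b X) :
    IsSwitchable u b a v (switch u v a b X) := by
  constructor <;> simp [switch, h.edge, h.edge', h.nonedge, h.nonedge']

lemma biadj_switch (h : IsSwitchable u v a b X) :
    biadj (switch u v a b X) = biadj X - Matrix.single u v 1 - Matrix.single a b 1
      + Matrix.single u b 1 + Matrix.single a v 1 := by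
  ext i j
  have hua := h.ne_left
  have hvb := h.ne_right
  simp only [Matrix.add_apply, Matrix.sub_apply, Matrix.single_apply, biadj_apply, switch]
  by_cases hu : i = u
  · subst hu
    by_cases hv : j = v
    · subst hv; simp [h.edge, hua.symm, hvb.symm]
    by_cases hb : j = b
    · subst hb; simp [h.nonedge, hua.symm, hvb]
    simp [hv, hb, Ne.symm hv, Ne.symm hb]
  by_cases ha : i = a
  · subst ha
    by_cases hv : j = v
    · subst hv; simp [h.nonedge', hua, hvb.symm]
    by_cases hb : j = b
    · subst hb; simp [h.edge', hua, hvb]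
    simp [hv, hb, Ne.symm hv, Ne.symm hb]
  simp [hu, ha, Ne.symm hu, Ne.symm ha]

lemma switch_mem_BBG (h : IsSwitchable u v a b X) (hX : X ∈ BBG n m d₁ d₂) :
    switch u v a b X ∈ BBG n m d₁ d₂ := by
  rw [mem_BBG_iff] at hX ⊢
  refine ⟨fun i => ?_, fun j => ?_⟩
  · rw [← hX.sum_row i, h.biadj_switch]
    simp [Matrix.single_apply, Finset.sum_add_distrib, Finset.sum_sub_distrib, ite_and]
    ring
  · rw [← hX.sum_col j, h.biadj_switch]
    simp [Matrix.single_apply, Finset.sum_add_distrib, Finset.sum_sub_distrib, ite_and]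

lemma frobeniusInner_sub_switch (h : IsSwitchable u v a b X) (Q : Matrix (Fin n) (Fin m) ℝ) :
    frobeniusInner Q (biadj X) - frobeniusInner Q (biadj (switch u v a b X)) =
      mixedDiff Q u v a b := by
  rw [h.biadj_switch]
  simp only [frobeniusInner, mixedDiff, Matrix.add_apply, Matrix.sub_apply, Matrix.single_apply,
    mul_add, mul_sub, Finset.sum_add_distrib, Finset.sum_sub_distrib]
  simp [ite_and]
  ring

end IsSwitchable

/-- Switching is a reversible move on `BBG n m d₁ d₂`. -/
lemma sum_switchWeight_mul (u : Fin n) (v : Fin m) (a : Fin n) (b : Fin m)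
    (F : (Fin n → Fin m → Bool) → ℝ) :
    ∑ X ∈ BBG n m d₁ d₂, switchWeight (biadj X) u v a b * F X =
      ∑ X ∈ BBG n m d₁ d₂, switchWeight (biadj X) u b a v * F (switch u v a b X) := by
  simp only [switchWeight_biadj, ite_mul, one_mul, zero_mul]
  rw [← Finset.sum_filter, ← Finset.sum_filter]
  refine Finset.sum_nbij' (switch u v a b) (switch u v a b) (fun X hX => ?_) (fun X hX => ?_)
    (fun X _ => switch_switch ..) (fun X _ => switch_switch ..)
    (fun X _ => by rw [switch_switch])
  · rw [Finset.mem_filter] at hX ⊢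
    exact ⟨hX.2.switch_mem_BBG hX.1, hX.2.reverse⟩
  · rw [Finset.mem_filter] at hX ⊢
    rw [← switch_comm]
    exact ⟨hX.2.switch_mem_BBG hX.1, hX.2.reverse⟩

end Switching

section SwitchingEstimates

open Matrix

variable {n m d₁ d₂ : ℕ} {w : (Fin n → Fin m → Bool) → ℝ} {ρ : ℝ}

lemma sum_switchWeight_mul_le {u : Fin n} {v : Fin m}
    (hw : ∀ a b X, IsSwitchable u v a b X → w X ≤ ρ * w (switch u v a b X)) :
    ∑ X ∈ BBG n m d₁ d₂, (∑ a, ∑ b, switchWeight (biadj X) u v a b) * w X ≤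
      ρ * ∑ X ∈ BBG n m d₁ d₂, (∑ a, ∑ b, switchWeight (biadj X) u b a v) * w X := by
  simp only [Finset.sum_mul, Finset.mul_sum,
    Finset.sum_comm (s := BBG n m d₁ d₂) (t := (Finset.univ : Finset (Fin n))),
    Finset.sum_comm (s := BBG n m d₁ d₂) (t := (Finset.univ : Finset (Fin m)))]
  refine Finset.sum_le_sum fun a _ => Finset.sum_le_sum fun b _ => ?_
  calc ∑ X ∈ BBG n m d₁ d₂, switchWeight (biadj X) u v a b * w X
      ≤ ∑ X ∈ BBG n m d₁ d₂, switchWeight (biadj X) u v a b * (ρ * w (switch u v a b X)) := by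
        refine Finset.sum_le_sum fun X _ => ?_
        rw [switchWeight_biadj]
        split_ifs with h
        · simpa using hw a b X h
        · simp
    _ = ∑ X ∈ BBG n m d₁ d₂, ρ * (switchWeight (biadj X) u b a v * w X) := by
        rw [sum_switchWeight_mul u v a b]
        simp only [switch_switch, mul_left_comm]

/-- There are at least `n d₁ - 2 d₁ d₂` ways to switch an edge `uv` away and at most `d₁ d₂` ways
to switch it back. -/
lemma sub_mul_sum_biadj_mul_le {u : Fin n} {v : Fin m} (hw₀ : ∀ X, 0 ≤ w X) (hρ : 0 ≤ ρ)
    (hw : ∀ a b X, IsSwitchable u v a b X → w X ≤ ρ * w (switch u v a b X)) :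
    ((n : ℝ) * d₁ - 2 * (d₁ * d₂)) * ∑ X ∈ BBG n m d₁ d₂, biadj X u v * w X ≤
      ρ * (d₁ * d₂ * ∑ X ∈ BBG n m d₁ d₂, w X) := by
  calc ((n : ℝ) * d₁ - 2 * (d₁ * d₂)) * ∑ X ∈ BBG n m d₁ d₂, biadj X u v * w X
      ≤ ∑ X ∈ BBG n m d₁ d₂, (∑ a, ∑ b, switchWeight (biadj X) u v a b) * w X := by
        rw [Finset.mul_sum]
        refine Finset.sum_le_sum fun X hX => ?_
        rw [(mem_BBG_iff.1 hX).sum_switchWeight_edge, Fintype.card_fin]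
        have paths := mul_nonneg (mul_nonneg (biadj_nonneg X u v)
          (mul_transpose_mul_nonneg (biadj_nonneg X) u v)) (hw₀ X)
        linarith
    _ ≤ ρ * ∑ X ∈ BBG n m d₁ d₂, (∑ a, ∑ b, switchWeight (biadj X) u b a v) * w X :=
        sum_switchWeight_mul_le hw
    _ ≤ ρ * (d₁ * d₂ * ∑ X ∈ BBG n m d₁ d₂, w X) := by
        refine mul_le_mul_of_nonneg_left ?_ hρ
        rw [Finset.mul_sum]
        exact Finset.sum_le_sum fun X hX => mul_le_mul_of_nonneg_right
          ((mem_BBG_iff.1 hX).sum_switchWeight_nonedge_le (biadj_nonneg X) (biadj_le_one X) u v)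
          (hw₀ X)

lemma sum_biadj_mul_le {u : Fin n} {v : Fin m} (hd₁ : 0 < d₁) (hd₂ : 4 * d₂ ≤ n)
    (hw₀ : ∀ X, 0 ≤ w X) (hρ : 0 ≤ ρ)
    (hw : ∀ a b X, IsSwitchable u v a b X → w X ≤ ρ * w (switch u v a b X)) :
    ∑ X ∈ BBG n m d₁ d₂, biadj X u v * w X ≤
      2 * ρ * (d₂ / n) * ∑ X ∈ BBG n m d₁ d₂, w X := by
  have h := sub_mul_sum_biadj_mul_le (d₁ := d₁) (d₂ := d₂) hw₀ hρ hw
  have hn : (0 : ℝ) < n := by exact_mod_cast u.pos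
  have hd₁' : (0 : ℝ) < d₁ := by exact_mod_cast hd₁
  have hd₂' : 4 * (d₂ : ℝ) ≤ n := by exact_mod_cast hd₂
  set S := ∑ X ∈ BBG n m d₁ d₂, biadj X u v * w X
  set W := ∑ X ∈ BBG n m d₁ d₂, w X
  have hS : 0 ≤ S := Finset.sum_nonneg fun X _ => mul_nonneg (biadj_nonneg ..) (hw₀ X)
  have half : (n * d₁ / 2) * S ≤ ρ * (d₁ * d₂ * W) := by
    refine le_trans (mul_le_mul_of_nonneg_right ?_ hS) h
    nlinarith
  have cancel : (n / 2) * S ≤ ρ * d₂ * W := by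
    refine le_of_mul_le_mul_left ?_ hd₁'
    linarith
  rw [show 2 * ρ * (d₂ / n) * W = ρ * d₂ * W / (n / 2) by field_simp,
    le_div_iff₀ (by positivity)]
  linarith

end SwitchingEstimates

/-! ### Exponentially tilted sums -/

section Tilt

open Matrix

variable {n m d₁ d₂ : ℕ} {Q : Matrix (Fin n) (Fin m) ℝ} {q θ : ℝ}

/-- The density, up to normalization, of the exponential tilt of the uniform measure by the
statistic `frobeniusInner Q`. -/
def tiltWeight (θ : ℝ) (Q : Matrix (Fin n) (Fin m) ℝ) (X : Fin n → Fin m → Bool) : ℝ :=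
  Real.exp (θ * frobeniusInner Q (biadj X))

lemma tiltWeight_pos (θ : ℝ) (Q : Matrix (Fin n) (Fin m) ℝ) (X : Fin n → Fin m → Bool) :
    0 < tiltWeight θ Q X :=
  Real.exp_pos _

lemma sum_tiltWeight_nonneg (θ : ℝ) (Q : Matrix (Fin n) (Fin m) ℝ)
    (s : Finset (Fin n → Fin m → Bool)) : 0 ≤ ∑ X ∈ s, tiltWeight θ Q X :=
  Finset.sum_nonneg fun X _ => (tiltWeight_pos θ Q X).le

lemma tiltWeight_le_switch (hθ : 0 ≤ θ) (hQ : ∀ u v, |Q u v| ≤ q) {u a : Fin n} {v b : Fin m}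
    {X : Fin n → Fin m → Bool} (h : IsSwitchable u v a b X) :
    tiltWeight θ Q X ≤ Real.exp (4 * θ * q) * tiltWeight θ Q (switch u v a b X) := by
  rw [tiltWeight, tiltWeight, ← Real.exp_add, Real.exp_le_exp]
  have drop := h.frobeniusInner_sub_switch Q
  have bound := mul_le_mul_of_nonneg_left (mixedDiff_le hQ u v a b) hθ
  rw [← drop] at bound
  linarith

lemma sum_biadj_mul_tiltWeight_le (hd₁ : 0 < d₁) (hd₂ : 4 * d₂ ≤ n) (hθ : 0 ≤ θ)
    (hQ : ∀ u v, |Q u v| ≤ q) (u : Fin n) (v : Fin m) :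
    ∑ X ∈ BBG n m d₁ d₂, biadj X u v * tiltWeight θ Q X ≤
      2 * Real.exp (4 * θ * q) * (d₂ / n) * ∑ X ∈ BBG n m d₁ d₂, tiltWeight θ Q X :=
  sum_biadj_mul_le hd₁ hd₂ (fun X => (tiltWeight_pos θ Q X).le) (Real.exp_pos _).le
    fun _ _ _ h => tiltWeight_le_switch hθ hQ h

/-- Given the edges `ub` and `av`, every switching of `ab` preserves both. -/
lemma sum_path_mul_tiltWeight_le (hd₁ : 0 < d₁) (hd₂ : 4 * d₂ ≤ n) (hθ : 0 ≤ θ)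
    (hQ : ∀ u v, |Q u v| ≤ q) {u a : Fin n} {v b : Fin m} (hau : a ≠ u) (hbv : b ≠ v) :
    ∑ X ∈ BBG n m d₁ d₂, biadj X a b * (biadj X u b * biadj X a v * tiltWeight θ Q X) ≤
      2 * Real.exp (4 * θ * q) * (d₂ / n) *
        ∑ X ∈ BBG n m d₁ d₂, biadj X u b * biadj X a v * tiltWeight θ Q X := by
  have hw₀ (X : Fin n → Fin m → Bool) : 0 ≤ biadj X u b * biadj X a v * tiltWeight θ Q X :=
    mul_nonneg (mul_nonneg (biadj_nonneg ..) (biadj_nonneg ..)) (tiltWeight_pos θ Q X).le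
  refine sum_biadj_mul_le hd₁ hd₂ hw₀ (Real.exp_pos _).le fun a' b' X h => ?_
  by_cases hub : X u b = true
  swap
  · simpa [biadj_apply, hub] using mul_nonneg (Real.exp_pos _).le (hw₀ (switch a b a' b' X))
  by_cases hav : X a v = true
  swap
  · simpa [biadj_apply, hav] using mul_nonneg (Real.exp_pos _).le (hw₀ (switch a b a' b' X))
  have hua' : u ≠ a' := by
    rintro rfl
    simpa [hub] using h.nonedge'
  have hvb' : v ≠ b' := by
    rintro rfl
    simpa [hav] using h.nonedge
  have keep_ub : switch a b a' b' X u b = true := by simp [switch, hub, hau.symm, hua']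
  have keep_av : switch a b a' b' X a v = true := by simp [switch, hav, hbv.symm, hvb']
  simpa [biadj_apply, hub, hav, keep_ub, keep_av] using tiltWeight_le_switch hθ hQ h

lemma biadj_mul_self (X : Fin n → Fin m → Bool) (u : Fin n) (v : Fin m) :
    biadj X u v * biadj X u v = biadj X u v := by
  simp [biadj_apply]

lemma sum_sum_erase_path_mul_tiltWeight_le (hd₁ : 0 < d₁) (hd₂ : 4 * d₂ ≤ n) (hθ : 0 ≤ θ)
    (hQ : ∀ u v, |Q u v| ≤ q) (u : Fin n) (v : Fin m) :
    ∑ X ∈ BBG n m d₁ d₂, (∑ a ∈ Finset.univ.erase u, ∑ b ∈ Finset.univ.erase v,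
      biadj X a b * (biadj X u b * biadj X a v)) * tiltWeight θ Q X ≤
      2 * Real.exp (4 * θ * q) * (d₂ / n) * (d₁ * d₂ * ∑ X ∈ BBG n m d₁ d₂, tiltWeight θ Q X) := by
  set p := 2 * Real.exp (4 * θ * q) * ((d₂ : ℝ) / n)
  have pairs₀ (a : Fin n) (b : Fin m) :
      0 ≤ p * ∑ X ∈ BBG n m d₁ d₂, biadj X u b * biadj X a v * tiltWeight θ Q X :=
    mul_nonneg (by positivity) (Finset.sum_nonneg fun X _ => mul_nonneg
      (mul_nonneg (biadj_nonneg ..) (biadj_nonneg ..)) (tiltWeight_pos θ Q X).le)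
  have pairs : d₁ * d₂ * ∑ X ∈ BBG n m d₁ d₂, tiltWeight θ Q X =
      ∑ X ∈ BBG n m d₁ d₂, (∑ a, ∑ b, biadj X u b * biadj X a v) * tiltWeight θ Q X := by
    rw [Finset.mul_sum]
    exact Finset.sum_congr rfl fun X hX => by rw [(mem_BBG_iff.1 hX).sum_row_mul_col]
  calc _ = ∑ a ∈ Finset.univ.erase u, ∑ b ∈ Finset.univ.erase v, ∑ X ∈ BBG n m d₁ d₂,
        biadj X a b * (biadj X u b * biadj X a v * tiltWeight θ Q X) := by
        simp only [Finset.sum_mul, Finset.sum_comm (s := BBG n m d₁ d₂), mul_assoc]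
    _ ≤ ∑ a ∈ Finset.univ.erase u, ∑ b ∈ Finset.univ.erase v,
        p * ∑ X ∈ BBG n m d₁ d₂, biadj X u b * biadj X a v * tiltWeight θ Q X :=
        Finset.sum_le_sum fun a ha => Finset.sum_le_sum fun b hb =>
          sum_path_mul_tiltWeight_le hd₁ hd₂ hθ hQ (Finset.ne_of_mem_erase ha)
            (Finset.ne_of_mem_erase hb)
    _ ≤ ∑ a, ∑ b, p * ∑ X ∈ BBG n m d₁ d₂, biadj X u b * biadj X a v * tiltWeight θ Q X :=
        (Finset.sum_le_sum fun a _ => Finset.sum_le_univ_sum_of_nonneg (pairs₀ a)).trans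
          (Finset.sum_le_univ_sum_of_nonneg fun a => Finset.sum_nonneg fun b _ => pairs₀ a b)
    _ = p * (d₁ * d₂ * ∑ X ∈ BBG n m d₁ d₂, tiltWeight θ Q X) := by
        rw [pairs]
        simp only [Finset.sum_mul, Finset.mul_sum,
          Finset.sum_comm (s := BBG n m d₁ d₂) (t := (Finset.univ : Finset (Fin n))),
          Finset.sum_comm (s := BBG n m d₁ d₂) (t := (Finset.univ : Finset (Fin m)))]

lemma sum_mul_transpose_mul_tiltWeight_le (hd₁ : 0 < d₁) (hd₂ : 0 < d₂) (hd₂n : 4 * d₂ ≤ n)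
    (hθ : 0 ≤ θ) (hQ : ∀ u v, |Q u v| ≤ q) (u : Fin n) (v : Fin m) :
    ∑ X ∈ BBG n m d₁ d₂, (biadj X * (biadj X)ᵀ * biadj X) u v * tiltWeight θ Q X ≤
      6 * Real.exp (4 * θ * q) * (d₂ / n) * (d₁ * d₂) *
        ∑ X ∈ BBG n m d₁ d₂, tiltWeight θ Q X := by
  have genuine := sum_sum_erase_path_mul_tiltWeight_le hd₁ hd₂n hθ hQ u v
  have edge := sum_biadj_mul_tiltWeight_le hd₁ hd₂n hθ hQ u v
  set ρ := Real.exp (4 * θ * q)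
  set W := ∑ X ∈ BBG n m d₁ d₂, tiltWeight θ Q X
  have degenerate : (d₁ + d₂) * ∑ X ∈ BBG n m d₁ d₂, biadj X u v * tiltWeight θ Q X ≤
      2 * (d₁ * d₂) * (2 * ρ * (d₂ / n) * W) := by
    have hd₁' : (1 : ℝ) ≤ d₁ := by exact_mod_cast hd₁
    have hd₂' : (1 : ℝ) ≤ d₂ := by exact_mod_cast hd₂
    exact mul_le_mul (by nlinarith) edge
      (Finset.sum_nonneg fun X _ => mul_nonneg (biadj_nonneg ..) (tiltWeight_pos θ Q X).le)
      (by positivity)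
  have split : ∀ X ∈ BBG n m d₁ d₂, (biadj X * (biadj X)ᵀ * biadj X) u v * tiltWeight θ Q X ≤
      (∑ a ∈ Finset.univ.erase u, ∑ b ∈ Finset.univ.erase v,
        biadj X a b * (biadj X u b * biadj X a v)) * tiltWeight θ Q X +
      (d₁ + d₂) * (biadj X u v * tiltWeight θ Q X) := fun X hX => by
    rw [← mul_assoc, ← add_mul]
    exact mul_le_mul_of_nonneg_right ((mem_BBG_iff.1 hX).mul_transpose_mul_le
      (biadj_mul_self X) u v) (tiltWeight_pos θ Q X).le
  refine (Finset.sum_le_sum split).trans ?_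
  rw [Finset.sum_add_distrib, ← Finset.mul_sum]
  linarith

/-- The symmetrized form of the mean value inequality for `exp`. -/
lemma exp_sub_exp_mul_sub_le {x y θ : ℝ} (hθ : 0 ≤ θ) :
    (Real.exp (θ * x) - Real.exp (θ * y)) * (x - y) ≤
      θ * (x - y) ^ 2 * (Real.exp (θ * x) + Real.exp (θ * y)) := by
  wlog h : y ≤ x generalizing x y
  · have := this (le_of_not_ge h)
    linarith
  have tangent : Real.exp (θ * x) * (θ * (y - x) + 1) ≤ Real.exp (θ * y) := by
    rw [show θ * y = θ * x + θ * (y - x) by ring, Real.exp_add]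
    exact mul_le_mul_of_nonneg_left (Real.add_one_le_exp _) (Real.exp_pos _).le
  calc (Real.exp (θ * x) - Real.exp (θ * y)) * (x - y)
      ≤ Real.exp (θ * x) * (θ * (x - y)) * (x - y) :=
        mul_le_mul_of_nonneg_right (by linarith) (sub_nonneg.2 h)
    _ = θ * (x - y) ^ 2 * Real.exp (θ * x) := by ring
    _ ≤ θ * (x - y) ^ 2 * (Real.exp (θ * x) + Real.exp (θ * y)) := by
        gcongr
        linarith [Real.exp_pos (θ * y)]

lemma sum_sum_switchWeight_mul (F : Fin n → Fin m → Fin n → Fin m → (Fin n → Fin m → Bool) → ℝ) :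
    ∑ X ∈ BBG n m d₁ d₂, ∑ u, ∑ v, ∑ a, ∑ b, switchWeight (biadj X) u v a b * F u v a b X =
      ∑ X ∈ BBG n m d₁ d₂, ∑ u, ∑ v, ∑ a, ∑ b,
        switchWeight (biadj X) u v a b * F u b a v (switch u v a b X) := by
  simp only [Finset.sum_comm (s := BBG n m d₁ d₂) (t := (Finset.univ : Finset (Fin n))),
    Finset.sum_comm (s := BBG n m d₁ d₂) (t := (Finset.univ : Finset (Fin m)))]
  rw [← sum_four_swap_cols]
  refine Finset.sum_congr rfl fun u _ => Finset.sum_congr rfl fun v _ =>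
    Finset.sum_congr rfl fun a _ => Finset.sum_congr rfl fun b _ => ?_
  rw [sum_switchWeight_mul u b a v, switch_comm]

lemma sum_mixedDiff_mul_tiltWeight_le (hθ : 0 ≤ θ) :
    ∑ X ∈ BBG n m d₁ d₂, (∑ u, ∑ v, ∑ a, ∑ b,
        switchWeight (biadj X) u v a b * mixedDiff Q u v a b) * tiltWeight θ Q X ≤
      θ * ∑ X ∈ BBG n m d₁ d₂, (∑ u, ∑ v, ∑ a, ∑ b,
        switchWeight (biadj X) u v a b * mixedDiff Q u v a b ^ 2) * tiltWeight θ Q X := by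
  have mixedDiff_swap (u : Fin n) (v : Fin m) (a : Fin n) (b : Fin m) :
      mixedDiff Q u b a v = -mixedDiff Q u v a b := by
    unfold mixedDiff; ring
  have drift := sum_sum_switchWeight_mul (d₁ := d₁) (d₂ := d₂)
    fun u v a b X => mixedDiff Q u v a b * tiltWeight θ Q X
  have variation := sum_sum_switchWeight_mul (d₁ := d₁) (d₂ := d₂)
    fun u v a b X => mixedDiff Q u v a b ^ 2 * tiltWeight θ Q X
  have pointwise (X : Fin n → Fin m → Bool) (u : Fin n) (v : Fin m) (a : Fin n) (b : Fin m) :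
      switchWeight (biadj X) u v a b * (mixedDiff Q u v a b * tiltWeight θ Q X) +
        switchWeight (biadj X) u v a b *
          (mixedDiff Q u b a v * tiltWeight θ Q (switch u v a b X)) ≤
      θ * (switchWeight (biadj X) u v a b * (mixedDiff Q u v a b ^ 2 * tiltWeight θ Q X) +
        switchWeight (biadj X) u v a b *
          (mixedDiff Q u b a v ^ 2 * tiltWeight θ Q (switch u v a b X))) := by
    rw [switchWeight_biadj]
    split_ifs with h
    · have := exp_sub_exp_mul_sub_le (x := frobeniusInner Q (biadj X))
        (y := frobeniusInner Q (biadj (switch u v a b X))) hθ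
      rw [h.frobeniusInner_sub_switch] at this
      rw [mixedDiff_swap u v a b]
      unfold tiltWeight
      linarith
    · simp
  have total := Finset.sum_le_sum fun X (_ : X ∈ BBG n m d₁ d₂) => Finset.sum_le_sum
    fun u (_ : u ∈ Finset.univ) => Finset.sum_le_sum fun v (_ : v ∈ Finset.univ) =>
    Finset.sum_le_sum fun a (_ : a ∈ Finset.univ) => Finset.sum_le_sum
    fun b (_ : b ∈ Finset.univ) => pointwise X u v a b
  simp only [Finset.sum_add_distrib, ← Finset.mul_sum, ← drift, ← variation] at total
  simp only [Finset.sum_mul, mul_assoc]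
  linarith

lemma sum_frobeniusInner_mul {ι : Type*} (s : Finset ι) (R : Matrix (Fin n) (Fin m) ℝ)
    (B : ι → Matrix (Fin n) (Fin m) ℝ) (w : ι → ℝ) :
    ∑ X ∈ s, frobeniusInner R (B X) * w X = ∑ u, ∑ v, R u v * ∑ X ∈ s, B X u v * w X := by
  simp only [frobeniusInner, Finset.sum_mul, Finset.mul_sum, mul_assoc,
    Finset.sum_comm (s := s) (t := (Finset.univ : Finset (Fin n))),
    Finset.sum_comm (s := s) (t := (Finset.univ : Finset (Fin m)))]

lemma sum_frobeniusInner_mul_tiltWeight_le_of_nonneg (hd₁ : 0 < d₁) (hd₂ : 4 * d₂ ≤ n)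
    (hθ : 0 ≤ θ) (hQ : ∀ u v, |Q u v| ≤ q) {R : Matrix (Fin n) (Fin m) ℝ}
    (hR : ∀ u v, 0 ≤ R u v) :
    ∑ X ∈ BBG n m d₁ d₂, frobeniusInner R (biadj X) * tiltWeight θ Q X ≤
      2 * Real.exp (4 * θ * q) * (d₂ / n) * (∑ u, ∑ v, R u v) *
        ∑ X ∈ BBG n m d₁ d₂, tiltWeight θ Q X := by
  rw [sum_frobeniusInner_mul]
  refine (Finset.sum_le_sum fun u _ => Finset.sum_le_sum fun v _ => mul_le_mul_of_nonneg_left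
    (sum_biadj_mul_tiltWeight_le hd₁ hd₂ hθ hQ u v) (hR u v)).trans_eq ?_
  simp only [← Finset.sum_mul]
  ring

lemma neg_le_sum_frobeniusInner_path_mul_tiltWeight (hd₁ : 0 < d₁) (hd₂ : 0 < d₂)
    (hd₂n : 4 * d₂ ≤ n) (hθ : 0 ≤ θ) (hQ : ∀ u v, |Q u v| ≤ q) :
    -((∑ u, ∑ v, |Q u v|) * (6 * Real.exp (4 * θ * q) * (d₂ / n) * (d₁ * d₂) *
        ∑ X ∈ BBG n m d₁ d₂, tiltWeight θ Q X)) ≤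
      ∑ X ∈ BBG n m d₁ d₂,
        frobeniusInner Q (biadj X * (biadj X)ᵀ * biadj X) * tiltWeight θ Q X := by
  rw [sum_frobeniusInner_mul]
  simp only [Finset.sum_mul (s := (Finset.univ : Finset (Fin n))),
    Finset.sum_mul (s := (Finset.univ : Finset (Fin m))), ← Finset.sum_neg_distrib]
  refine Finset.sum_le_sum fun u _ => Finset.sum_le_sum fun v _ => ?_
  have paths_nonneg : 0 ≤ ∑ X ∈ BBG n m d₁ d₂,
      (biadj X * (biadj X)ᵀ * biadj X) u v * tiltWeight θ Q X :=
    Finset.sum_nonneg fun X _ => mul_nonneg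
      (mul_transpose_mul_nonneg (biadj_nonneg X) u v) (tiltWeight_pos θ Q X).le
  have paths_le := mul_le_mul_of_nonneg_left
    (sum_mul_transpose_mul_tiltWeight_le (m := m) hd₁ hd₂ hd₂n hθ hQ u v) (abs_nonneg (Q u v))
  linarith [mul_le_mul_of_nonneg_right (neg_abs_le (Q u v)) paths_nonneg]

lemma sum_sq_mixedDiff_mul_tiltWeight_le (hd₁ : 0 < d₁) (hd₂ : 0 < d₂) (hd₂n : 4 * d₂ ≤ n)
    (hq : 0 ≤ q) (hθ : 0 ≤ θ) (hQ : ∀ u v, |Q u v| ≤ q) :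
    ∑ X ∈ BBG n m d₁ d₂, (∑ u, ∑ v, ∑ a, ∑ b,
        switchWeight (biadj X) u v a b * mixedDiff Q u v a b ^ 2) * tiltWeight θ Q X ≤
      24 * Real.exp (4 * θ * q) * (d₁ * d₂) * (∑ u, ∑ v, Q u v ^ 2) *
        ∑ X ∈ BBG n m d₁ d₂, tiltWeight θ Q X := by
  have pointwise : ∀ X ∈ BBG n m d₁ d₂, _ := fun X hX => mul_le_mul_of_nonneg_right
    ((mem_BBG_iff.1 hX).sum_switchWeight_mul_sq_mixedDiff_le (biadj_nonneg X) (biadj_le_one X) Q)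
    (tiltWeight_pos θ Q X).le
  refine (Finset.sum_le_sum pointwise).trans ?_
  have edges := sum_frobeniusInner_mul_tiltWeight_le_of_nonneg hd₁ hd₂n hθ hQ
    (R := Matrix.of fun u v => Q u v ^ 2) fun _ _ => sq_nonneg _
  simp only [add_mul, Finset.sum_add_distrib, mul_assoc, ← Finset.mul_sum, Fintype.card_fin,
    Matrix.of_apply] at edges ⊢
  set ρ := Real.exp (4 * (θ * q))
  set W := ∑ X ∈ BBG n m d₁ d₂, tiltWeight θ Q X
  set V := ∑ u, ∑ v, Q u v ^ 2
  have hρ : 1 ≤ ρ := Real.one_le_exp (by positivity)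
  have hW : 0 ≤ W := sum_tiltWeight_nonneg ..
  have hV : 0 ≤ V := Finset.sum_nonneg fun u _ => Finset.sum_nonneg fun v _ => sq_nonneg _
  have hn : (0 : ℝ) < n := by exact_mod_cast (by omega : 0 < n)
  have edges' := mul_le_mul_of_nonneg_left edges (show (0 : ℝ) ≤ 8 * (n * d₁) by positivity)
  have cancel : 8 * (n * d₁ : ℝ) * (2 * (ρ * (d₂ / n * (V * W)))) =
      16 * ρ * (d₁ * d₂ * (V * W)) := by
    field_simp
    ring
  have absorb : (d₁ * d₂ : ℝ) * (V * W) ≤ ρ * (d₁ * d₂ * (V * W)) :=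
    le_mul_of_one_le_left (mul_nonneg (by positivity) (mul_nonneg hV hW)) hρ
  linarith

/-- Under the tilted measure the expected drop under a switching is dominated by its variance. -/
lemma sub_mul_sum_frobeniusInner_mul_tiltWeight_le (hd₁ : 0 < d₁) (hd₂ : 0 < d₂)
    (hd₂n : 4 * d₂ ≤ n) (hq : 0 ≤ q) (hθ : 0 ≤ θ) (hQ : ∀ u v, |Q u v| ≤ q) :
    (n * d₁ - d₁ * d₂) * ∑ X ∈ BBG n m d₁ d₂, frobeniusInner Q (biadj X) * tiltWeight θ Q X ≤
      d₁ * d₂ * (|∑ u, ∑ v, Q u v|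
        + 6 * Real.exp (4 * θ * q) * (d₂ / n : ℝ) * (∑ u, ∑ v, |Q u v|)
        + 12 * Real.exp (4 * θ * q) * θ * (∑ u, ∑ v, Q u v ^ 2))
        * ∑ X ∈ BBG n m d₁ d₂, tiltWeight θ Q X := by
  have drift := sum_mixedDiff_mul_tiltWeight_le (m := m) (d₁ := d₁) (d₂ := d₂) (Q := Q) hθ
  have variation := mul_le_mul_of_nonneg_left
    (sum_sq_mixedDiff_mul_tiltWeight_le (m := m) hd₁ hd₂ hd₂n hq hθ hQ) hθ
  have paths := neg_le_sum_frobeniusInner_path_mul_tiltWeight (m := m) hd₁ hd₂ hd₂n hθ hQ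
  have drift_eq : ∀ X ∈ BBG n m d₁ d₂, (∑ u, ∑ v, ∑ a, ∑ b,
        switchWeight (biadj X) u v a b * mixedDiff Q u v a b) * tiltWeight θ Q X =
      2 * ((n * d₁ - d₁ * d₂) * (frobeniusInner Q (biadj X) * tiltWeight θ Q X)
        - d₁ * d₂ * (∑ u, ∑ v, Q u v) * tiltWeight θ Q X
        + frobeniusInner Q (biadj X * (biadj X)ᵀ * biadj X) * tiltWeight θ Q X) := fun X hX => by
    rw [(mem_BBG_iff.1 hX).sum_switchWeight_mul_mixedDiff, Fintype.card_fin]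
    ring
  rw [Finset.sum_congr rfl drift_eq, ← Finset.mul_sum, Finset.sum_add_distrib,
    Finset.sum_sub_distrib, ← Finset.mul_sum, ← Finset.mul_sum] at drift
  have mean := mul_le_mul_of_nonneg_right (le_abs_self (∑ u, ∑ v, Q u v))
    (mul_nonneg (by positivity) (sum_tiltWeight_nonneg θ Q (BBG n m d₁ d₂)) :
      0 ≤ (d₁ * d₂ : ℝ) * ∑ X ∈ BBG n m d₁ d₂, tiltWeight θ Q X)
  linarith

lemma sum_frobeniusInner_mul_tiltWeight_le (hd₁ : 0 < d₁) (hd₂ : 0 < d₂) (hd₂n : 4 * d₂ ≤ n)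
    (hq : 0 ≤ q) (hθ : 0 ≤ θ) (hQ : ∀ u v, |Q u v| ≤ q) :
    ∑ X ∈ BBG n m d₁ d₂, frobeniusInner Q (biadj X) * tiltWeight θ Q X ≤
      2 * (d₂ / n : ℝ) * (|∑ u, ∑ v, Q u v|
        + 6 * Real.exp (4 * θ * q) * (d₂ / n : ℝ) * (∑ u, ∑ v, |Q u v|)
        + 12 * Real.exp (4 * θ * q) * θ * (∑ u, ∑ v, Q u v ^ 2))
        * ∑ X ∈ BBG n m d₁ d₂, tiltWeight θ Q X := by
  have bound := sub_mul_sum_frobeniusInner_mul_tiltWeight_le (m := m) hd₁ hd₂ hd₂n hq hθ hQ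
  set B := |∑ u, ∑ v, Q u v| + 6 * Real.exp (4 * θ * q) * (d₂ / n : ℝ) * (∑ u, ∑ v, |Q u v|)
    + 12 * Real.exp (4 * θ * q) * θ * (∑ u, ∑ v, Q u v ^ 2)
  set W := ∑ X ∈ BBG n m d₁ d₂, tiltWeight θ Q X
  set L := ∑ X ∈ BBG n m d₁ d₂, frobeniusInner Q (biadj X) * tiltWeight θ Q X
  have hW : 0 ≤ W := sum_tiltWeight_nonneg ..
  have hB : 0 ≤ B := by positivity
  have hn : (0 : ℝ) < n := by exact_mod_cast (by omega : 0 < n)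
  have hd₁' : (0 : ℝ) < d₁ := by exact_mod_cast hd₁
  have hd₂n' : 4 * (d₂ : ℝ) ≤ n := by exact_mod_cast hd₂n
  have cancel : (n - d₂) * L ≤ d₂ * B * W :=
    le_of_mul_le_mul_left (by linarith) hd₁'
  rw [show 2 * (d₂ / n : ℝ) * B * W = 2 * (d₂ * B * W) / n by ring, le_div_iff₀ hn]
  rcases le_total 0 L with hL | hL
  · nlinarith
  · exact (mul_nonpos_of_nonpos_of_nonneg hL hn.le).trans
      (mul_nonneg zero_le_two (mul_nonneg (mul_nonneg d₂.cast_nonneg hB) hW))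

end Tilt

/-- Chernoff's method, with the bound on the moment generating function replaced by a bound `A` on
the mean of the tilted measure. -/
lemma card_filter_le_exp_mul_card {Ω : Type*} {s : Finset Ω} {f : Ω → ℝ} {θ A t : ℝ} (hθ : 0 ≤ θ)
    (h : ∑ X ∈ s, f X * Real.exp (θ * f X) ≤ A * ∑ X ∈ s, Real.exp (θ * f X)) :
    ((s.filter fun X => t ≤ f X).card : ℝ) ≤ Real.exp (θ * (A - t)) * s.card := by
  have partition : ∑ X ∈ s, Real.exp (θ * f X) ≤ Real.exp (θ * A) * s.card := by
    have tangent (X : Ω) : Real.exp (θ * f X) -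
        θ * (f X * Real.exp (θ * f X) - A * Real.exp (θ * f X)) ≤ Real.exp (θ * A) := by
      rw [show θ * A = θ * f X + (θ * A - θ * f X) by ring, Real.exp_add]
      linarith [mul_le_mul_of_nonneg_left (Real.add_one_le_exp (θ * A - θ * f X))
        (Real.exp_pos (θ * f X)).le]
    have total := Finset.sum_le_sum fun X (_ : X ∈ s) => tangent X
    rw [Finset.sum_sub_distrib, ← Finset.mul_sum, Finset.sum_sub_distrib, ← Finset.mul_sum,
      Finset.sum_const, nsmul_eq_mul] at total
    nlinarith [mul_nonneg hθ (sub_nonneg.2 h)]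
  have markov : ((s.filter fun X => t ≤ f X).card : ℝ) * Real.exp (θ * t) ≤
      ∑ X ∈ s, Real.exp (θ * f X) := by
    rw [← nsmul_eq_mul]
    exact (Finset.card_nsmul_le_sum _ _ _ fun X hX => Real.exp_le_exp.2
      (mul_le_mul_of_nonneg_left (Finset.mem_filter.1 hX).2 hθ)).trans
      (Finset.sum_le_sum_of_subset_of_nonneg (Finset.filter_subset _ _)
        fun X _ _ => (Real.exp_pos _).le)
  refine le_of_mul_le_mul_right ?_ (Real.exp_pos (θ * t))
  rw [mul_right_comm, ← Real.exp_add, ← mul_add, sub_add_cancel]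
  exact markov.trans partition

/-! ### Light entries -/

section LightPart

variable {α β : Type*} {c : ℝ} {M : Matrix α β ℝ}

/-- The light part of `M`, made of the entries of absolute value at most `c`. -/
def lightPart (c : ℝ) (M : Matrix α β ℝ) : Matrix α β ℝ :=
  Matrix.of fun u v => if |M u v| ≤ c then M u v else 0

lemma abs_lightPart_le (hc : 0 ≤ c) (M : Matrix α β ℝ) (u : α) (v : β) :
    |lightPart c M u v| ≤ c := by
  unfold lightPart
  rw [Matrix.of_apply]
  split_ifs with h
  · exact h
  · simpa using hc

lemma abs_lightPart_le_abs (c : ℝ) (M : Matrix α β ℝ) (u : α) (v : β) :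
    |lightPart c M u v| ≤ |M u v| := by
  unfold lightPart
  rw [Matrix.of_apply]
  split_ifs
  · exact le_rfl
  · simp

lemma abs_sub_lightPart_le (hc : 0 < c) (M : Matrix α β ℝ) (u : α) (v : β) :
    |M u v - lightPart c M u v| ≤ M u v ^ 2 / c := by
  unfold lightPart
  rw [Matrix.of_apply]
  split_ifs with h
  · rw [sub_self, abs_zero]
    positivity
  · rw [sub_zero, le_div_iff₀ hc, ← sq_abs]
    nlinarith [abs_nonneg (M u v), not_le.1 h]

variable [Fintype α] [Fintype β]

lemma sum_sq_lightPart_le (c : ℝ) (M : Matrix α β ℝ) :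
    ∑ u, ∑ v, lightPart c M u v ^ 2 ≤ ∑ u, ∑ v, M u v ^ 2 :=
  Finset.sum_le_sum fun u _ => Finset.sum_le_sum fun v _ =>
    sq_le_sq.2 (abs_lightPart_le_abs c M u v)

lemma abs_sum_lightPart_le (hc : 0 < c) (hM : ∑ u, ∑ v, M u v = 0) :
    |∑ u, ∑ v, lightPart c M u v| ≤ (∑ u, ∑ v, M u v ^ 2) / c := by
  have complement : ∑ u, ∑ v, lightPart c M u v = -∑ u, ∑ v, (M u v - lightPart c M u v) := by
    simp only [Finset.sum_sub_distrib, hM, zero_sub, neg_neg]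
  rw [complement, abs_neg]
  simp only [Finset.sum_div]
  exact (Finset.abs_sum_le_sum_abs _ _).trans (Finset.sum_le_sum fun u _ =>
    (Finset.abs_sum_le_sum_abs _ _).trans (Finset.sum_le_sum fun v _ =>
      abs_sub_lightPart_le hc M u v))

lemma sum_abs_lightPart_le (c : ℝ) (M : Matrix α β ℝ) :
    ∑ u, ∑ v, |lightPart c M u v| ≤
      √(Fintype.card α * Fintype.card β * ∑ u, ∑ v, M u v ^ 2) := by
  refine (Finset.sum_le_sum fun u _ => Finset.sum_le_sum fun v _ =>
    abs_lightPart_le_abs c M u v).trans (Real.le_sqrt_of_sq_le ?_)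
  have cauchy := sq_sum_le_card_mul_sum_sq (s := (Finset.univ : Finset (α × β)))
    (f := fun p => |M p.1 p.2|)
  simpa only [sq_abs, Fintype.sum_prod_type, Finset.card_univ, Fintype.card_prod, Nat.cast_mul]
    using cauchy

end LightPart

/-- The multiple of `√d₁` that dominates the contribution of the light entries. -/
def lightConst : ℝ := 7 + 36 * Real.exp 4

section LightTail

variable {n m d₁ d₂ : ℕ} {M : Matrix (Fin n) (Fin m) ℝ}

lemma sq_density_mul_sum_abs_lightPart_le (hn : 0 < n) (hnd : n * d₁ = m * d₂)
    (hcube : d₂ ^ 3 ≤ n ^ 2) (hM₂ : ∑ u, ∑ v, M u v ^ 2 ≤ 1) (c : ℝ) :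
    (d₂ / n : ℝ) ^ 2 * ∑ u, ∑ v, |lightPart c M u v| ≤ √d₁ := by
  have hn' : (0 : ℝ) < n := by exact_mod_cast hn
  have hnd' : (n : ℝ) * d₁ = m * d₂ := by exact_mod_cast hnd
  have hcube' : (d₂ : ℝ) ^ 3 / n ^ 2 ≤ 1 := (div_le_one (by positivity)).2 (by exact_mod_cast hcube)
  have sum_abs := sum_abs_lightPart_le c M
  simp only [Fintype.card_fin] at sum_abs
  calc (d₂ / n : ℝ) ^ 2 * ∑ u, ∑ v, |lightPart c M u v|
      ≤ (d₂ / n : ℝ) ^ 2 * √(n * m) := by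
        gcongr
        exact sum_abs.trans (Real.sqrt_le_sqrt (mul_le_of_le_one_right (by positivity) hM₂))
    _ ≤ √d₁ := by
        refine Real.le_sqrt_of_sq_le ?_
        rw [mul_pow, Real.sq_sqrt (by positivity)]
        calc ((d₂ / n : ℝ) ^ 2) ^ 2 * (n * m) = (d₂ : ℝ) ^ 3 / n ^ 2 * (m * d₂ / n) := by
              field_simp
          _ = (d₂ : ℝ) ^ 3 / n ^ 2 * d₁ := by rw [← hnd', mul_div_cancel_left₀ _ hn'.ne']
          _ ≤ d₁ := mul_le_of_le_one_left d₁.cast_nonneg hcube'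

lemma sum_lightPart_mul_tiltWeight_le (hd₁ : 0 < d₁) (hd₂ : 0 < d₂)
    (hnd : n * d₁ = m * d₂) (hd₂n : 4 * d₂ ≤ n) (hcube : d₂ ^ 3 ≤ n ^ 2)
    (hM : ∑ u, ∑ v, M u v = 0) (hM₂ : ∑ u, ∑ v, M u v ^ 2 ≤ 1) :
    ∑ X ∈ BBG n m d₁ d₂, frobeniusInner (lightPart (√d₁ / m) M) (biadj X) *
        tiltWeight (m / √d₁) (lightPart (√d₁ / m) M) X ≤
      (lightConst - 5) * √d₁ *
        ∑ X ∈ BBG n m d₁ d₂, tiltWeight (m / √d₁) (lightPart (√d₁ / m) M) X := by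
  have hn : 0 < n := by omega
  have hn' : (0 : ℝ) < n := by exact_mod_cast hn
  have hd₁' : (0 : ℝ) < d₁ := by exact_mod_cast hd₁
  have hnd' : (n : ℝ) * d₁ = m * d₂ := by exact_mod_cast hnd
  have hm' : (0 : ℝ) < m := by exact_mod_cast Nat.pos_of_mul_pos_right (hnd ▸ Nat.mul_pos hn hd₁)
  have density : (d₂ / n : ℝ) = d₁ / m := by
    rw [div_eq_div_iff hn'.ne' hm'.ne']
    linarith
  have paths := sq_density_mul_sum_abs_lightPart_le hn hnd hcube hM₂ (√d₁ / m)
  set s := √(d₁ : ℝ)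
  have hs : 0 < s := Real.sqrt_pos.2 hd₁'
  have hd₁s : (d₁ : ℝ) = s ^ 2 := (Real.sq_sqrt hd₁'.le).symm
  have hc : 0 < s / m := by positivity
  have tilted := sum_frobeniusInner_mul_tiltWeight_le hd₁ hd₂ hd₂n hc.le
    (show 0 ≤ m / s by positivity) (abs_lightPart_le hc.le M)
  rw [show 4 * (m / s) * (s / m) = 4 by field_simp] at tilted
  refine tilted.trans (mul_le_mul_of_nonneg_right ?_ (sum_tiltWeight_nonneg ..))
  have mean : (d₂ / n : ℝ) * |∑ u, ∑ v, lightPart (s / m) M u v| ≤ s :=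
    calc _ ≤ (d₂ / n : ℝ) * (1 / (s / m)) := by
          gcongr
          exact (abs_sum_lightPart_le hc hM).trans (by gcongr)
      _ = s := by rw [density, hd₁s]; field_simp
  have variance : (m / s) * (d₂ / n : ℝ) * (∑ u, ∑ v, lightPart (s / m) M u v ^ 2) ≤ s :=
    calc _ ≤ (m / s) * (d₂ / n : ℝ) * 1 := by
          gcongr
          exact (sum_sq_lightPart_le _ M).trans hM₂
      _ = s := by rw [density, hd₁s]; field_simp
  unfold lightConst
  nlinarith [Real.exp_pos 4]

lemma card_lightPart_tail_le (hd₁ : 0 < d₁) (hd₂ : 0 < d₂)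
    (hnd : n * d₁ = m * d₂) (hd₂n : 4 * d₂ ≤ n) (hcube : d₂ ^ 3 ≤ n ^ 2)
    (hM : ∑ u, ∑ v, M u v = 0) (hM₂ : ∑ u, ∑ v, M u v ^ 2 ≤ 1) :
    (((BBG n m d₁ d₂).filter fun X =>
        lightConst * √d₁ ≤ frobeniusInner (lightPart (√d₁ / m) M) (biadj X)).card : ℝ) ≤
      Real.exp (-5 * m) * (BBG n m d₁ d₂).card := by
  have hs : 0 < √(d₁ : ℝ) := Real.sqrt_pos.2 (by exact_mod_cast hd₁)
  refine (card_filter_le_exp_mul_card (t := lightConst * √d₁) (by positivity)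
    (sum_lightPart_mul_tiltWeight_le hd₁ hd₂ hnd hd₂n hcube hM hM₂)).trans_eq ?_
  congr 2
  field_simp [hs.ne']
  ring

end LightTail

/-! ### Discrepancy -/

/-- The upper bound `x (1 + log (N / x))` for the logarithm of `N.choose x`. -/
def logChooseBound (N x : ℝ) : ℝ :=
  x * (1 + Real.log (N / x))

lemma logChooseBound_le_logChooseBound {N x y : ℝ} (hx : 0 < x) (hxy : x ≤ y) (hy : y ≤ N) :
    logChooseBound N x ≤ logChooseBound N y := by
  have hy₀ : 0 < y := hx.trans_le hxy
  have hN : 0 < N := hy₀.trans_le hy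
  have split : Real.log (N / x) = Real.log (N / y) + Real.log (y / x) := by
    rw [← Real.log_mul (by positivity) (by positivity), div_mul_div_cancel₀ hy₀.ne']
  have gain : x * Real.log (y / x) ≤ y - x :=
    calc x * Real.log (y / x) ≤ x * (y / x - 1) :=
          mul_le_mul_of_nonneg_left (Real.log_le_sub_one_of_pos (by positivity)) hx.le
      _ = y - x := by field_simp
  have log_nonneg : 0 ≤ Real.log (N / y) := Real.log_nonneg ((one_le_div hy₀).2 hy)
  unfold logChooseBound
  rw [split]
  nlinarith [mul_le_mul_of_nonneg_right hxy log_nonneg]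

lemma choose_le_exp_logChooseBound {n N k : ℕ} (hk : 0 < k) (hN : 0 < N) (hn : n ≤ N) :
    (n.choose k : ℝ) ≤ Real.exp (logChooseBound N k) := by
  have hk' : (0 : ℝ) < k := by exact_mod_cast hk
  have hN' : (0 : ℝ) < N := by exact_mod_cast hN
  calc (n.choose k : ℝ) ≤ n ^ k / k.factorial := Nat.choose_le_pow_div k n
    _ ≤ N ^ k / k.factorial := by gcongr
    _ = (N / k : ℝ) ^ k * (k ^ k / k.factorial) := by
        rw [div_pow]
        field_simp
    _ ≤ (N / k : ℝ) ^ k * Real.exp k := by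
        gcongr
        exact Real.pow_div_factorial_le_exp k hk'.le k
    _ = Real.exp (logChooseBound N k) := by
        rw [logChooseBound, mul_add, mul_one, Real.exp_add, mul_comm, mul_comm (k : ℝ),
          Real.exp_mul, Real.exp_log (div_pos hN' hk'), Real.rpow_natCast]

lemma sum_exp_neg_logChooseBound_le {α : Type*} [Fintype α] {N : ℕ} (hN : 0 < N)
    (hα : Fintype.card α ≤ N) :
    ∑ S : Finset α with S.Nonempty, Real.exp (-logChooseBound N S.card) ≤ Fintype.card α := by
  have by_card := Finset.sum_powerset_apply_card
    (fun k : ℕ => if k = 0 then (0 : ℝ) else Real.exp (-logChooseBound N k))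
    (x := (Finset.univ : Finset α))
  rw [Finset.powerset_univ, Finset.sum_range_succ'] at by_card
  simp only [Finset.card_univ, nsmul_eq_mul, Nat.add_eq_zero_iff, one_ne_zero, and_false,
    if_false, if_true, mul_zero, add_zero, Finset.card_eq_zero] at by_card
  have nonempty_iff (S : Finset α) : S.Nonempty ↔ ¬S = ∅ := Finset.nonempty_iff_ne_empty
  rw [Finset.sum_filter]
  simp only [nonempty_iff, ite_not]
  rw [by_card]
  calc _ ≤ ∑ _k ∈ Finset.range (Fintype.card α), (1 : ℝ) := Finset.sum_le_sum fun k _ => by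
        rw [Real.exp_neg, ← div_eq_mul_inv]
        exact div_le_one_of_le₀ (choose_le_exp_logChooseBound k.succ_pos hN hα) (Real.exp_pos _).le
    _ = Fintype.card α := by simp

/-- The number of edges between `S` and `T` in the bipartite graph with biadjacency matrix `A`. -/
def edgeCount {α β : Type*} (A : Matrix α β ℝ) (S : Finset α) (T : Finset β) : ℝ :=
  ∑ u ∈ S, ∑ v ∈ T, A u v

/-- The discrepancy property of a bipartite graph of density `p` whose larger side is `β`, at the
sets `S` and `T`: if the number `e` of edges between them is at least 16 times its expected value
`μ`, then `e log (e / μ)` is at most `κ` times the logarithm of the number of sets of their size. -/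
def HasDiscrepancyAt {α β : Type*} [Fintype β] (A : Matrix α β ℝ) (p κ : ℝ) (S : Finset α)
    (T : Finset β) : Prop :=
  16 * (p * S.card * T.card) ≤ edgeCount A S T →
    edgeCount A S T * Real.log (edgeCount A S T / (p * S.card * T.card)) ≤
      κ * logChooseBound (Fintype.card β) (max S.card T.card : ℝ)

/-- The discrepancy property at all pairs of nonempty sets. -/
def HasDiscrepancy {α β : Type*} [Fintype β] (A : Matrix α β ℝ) (p κ : ℝ) : Prop :=
  ∀ (S : Finset α) (T : Finset β), S.Nonempty → T.Nonempty → HasDiscrepancyAt A p κ S T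

section DiscrepancyTail

variable {n m d₁ d₂ : ℕ}

lemma card_edgeCount_tail_le (hd₁ : 0 < d₁) (hd₂n : 4 * d₂ ≤ n) {S : Finset (Fin n)}
    {T : Finset (Fin m)} {e μ : ℝ} (hμ : 0 < μ) (hμ_eq : μ = (d₂ / n : ℝ) * S.card * T.card)
    (he : 16 * μ ≤ e) :
    (((BBG n m d₁ d₂).filter fun X => e ≤ edgeCount (biadj X) S T).card : ℝ) ≤
      Real.exp (-(e * Real.log (e / μ)) / 16) * (BBG n m d₁ d₂).card := by
  set Q : Matrix (Fin n) (Fin m) ℝ := Matrix.of fun u v =>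
    if u ∈ S then (if v ∈ T then 1 else 0) else 0 with hQ
  have edgeCount_eq (X : Fin n → Fin m → Bool) :
      edgeCount (biadj X) S T = frobeniusInner Q (biadj X) := by
    simp [frobeniusInner, hQ, edgeCount, ite_mul, Finset.sum_ite_mem]
  have Q_bound : ∀ u v, |Q u v| ≤ 1 := fun u v => by
    simp only [hQ, Matrix.of_apply]
    split_ifs <;> simp
  have Q_nonneg : ∀ u v, 0 ≤ Q u v := fun u v => by
    simp only [hQ, Matrix.of_apply]
    split_ifs <;> simp
  have sum_Q : ∑ u, ∑ v, Q u v = S.card * T.card := by simp [hQ, Finset.sum_ite_mem]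
  obtain ⟨r, hr⟩ : ∃ r, r = e / μ := ⟨_, rfl⟩
  have he_eq : e = r * μ := by rw [hr, div_mul_cancel₀ _ hμ.ne']
  have hr₁₆ : 16 ≤ r := by rwa [hr, le_div_iff₀ hμ]
  -- The tilt for which `exp (4 θ) = r / 4`, which halves the mean relative to `e`.
  set θ := Real.log (r / 4) / 4 with hθ_def
  have hθ : 0 ≤ θ := div_nonneg (Real.log_nonneg (by linarith)) (by norm_num)
  have exp_θ : Real.exp (4 * θ * 1) = r / 4 := by
    rw [hθ_def, mul_one, mul_div_cancel₀ _ four_ne_zero, Real.exp_log (by linarith)]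
  have tilted :=
    sum_frobeniusInner_mul_tiltWeight_le_of_nonneg (m := m) hd₁ hd₂n hθ Q_bound Q_nonneg
  rw [exp_θ, sum_Q] at tilted
  simp only [edgeCount_eq]
  refine (card_filter_le_exp_mul_card (t := e) hθ tilted).trans
    (mul_le_mul_of_nonneg_right (Real.exp_le_exp.2 ?_) (Nat.cast_nonneg _))
  have mean : 2 * (r / 4) * (d₂ / n : ℝ) * (S.card * T.card) = e / 2 := by
    rw [he_eq, hμ_eq]
    ring
  have log_r : Real.log r ≤ 2 * Real.log (r / 4) := by
    rw [← Nat.cast_two, ← Real.log_pow]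
    exact Real.log_le_log (by linarith) (by nlinarith)
  rw [mean, hθ_def, ← hr]
  nlinarith [mul_le_mul_of_nonneg_left log_r (show 0 ≤ e by linarith)]

/-- Among the violating graphs take one with fewest edges between `S` and `T`: all the others are in
the corresponding tail. -/
lemma card_discrepancy_violation_le (hd₁ : 0 < d₁) (hd₂n : 4 * d₂ ≤ n) {S : Finset (Fin n)}
    {T : Finset (Fin m)} {μ : ℝ} (hμ : 0 < μ) (hμ_eq : μ = (d₂ / n : ℝ) * S.card * T.card)
    (B : ℝ) :
    (((BBG n m d₁ d₂).filter fun X => 16 * μ ≤ edgeCount (biadj X) S T ∧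
      B < edgeCount (biadj X) S T * Real.log (edgeCount (biadj X) S T / μ)).card : ℝ) ≤
      Real.exp (-B / 16) * (BBG n m d₁ d₂).card := by
  set F := (BBG n m d₁ d₂).filter fun X => 16 * μ ≤ edgeCount (biadj X) S T ∧
    B < edgeCount (biadj X) S T * Real.log (edgeCount (biadj X) S T / μ)
  rcases F.eq_empty_or_nonempty with hF | hF
  · rw [hF, Finset.card_empty, Nat.cast_zero]
    positivity
  obtain ⟨X₀, hX₀, minimal⟩ := F.exists_min_image (fun X => edgeCount (biadj X) S T) hF
  obtain ⟨large, violation⟩ := (Finset.mem_filter.1 hX₀).2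
  have subset_tail : F ⊆
      (BBG n m d₁ d₂).filter fun X => edgeCount (biadj X₀) S T ≤ edgeCount (biadj X) S T :=
    fun X hX => Finset.mem_filter.2 ⟨(Finset.mem_filter.1 hX).1, minimal X hX⟩
  calc (F.card : ℝ) ≤ _ := by exact_mod_cast Finset.card_le_card subset_tail
    _ ≤ _ := card_edgeCount_tail_le hd₁ hd₂n hμ hμ_eq large
    _ ≤ _ := mul_le_mul_of_nonneg_right (Real.exp_le_exp.2 (by linarith)) (Nat.cast_nonneg _)

lemma exp_neg_logChooseBound_max_le {m s t K : ℝ} (hK : 0 ≤ K) (hs : 1 ≤ s) (ht : 1 ≤ t)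
    (hsm : s ≤ m) (htm : t ≤ m) :
    Real.exp (-(16 * (K + 4) * logChooseBound m (max s t)) / 16) ≤
      m ^ (-(K + 2)) * (Real.exp (-logChooseBound m s) * Real.exp (-logChooseBound m t)) := by
  have hmax : max s t ≤ m := max_le hsm htm
  have bound_s := logChooseBound_le_logChooseBound (by linarith) (le_max_left s t) hmax
  have bound_t := logChooseBound_le_logChooseBound (by linarith) (le_max_right s t) hmax
  have bound_one := logChooseBound_le_logChooseBound one_pos (hs.trans (le_max_left s t)) hmax
  have log_le : Real.log m ≤ logChooseBound m 1 := by simp [logChooseBound]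
  rw [Real.rpow_def_of_pos (by linarith), ← Real.exp_add, ← Real.exp_add]
  refine Real.exp_le_exp.2 ?_
  nlinarith

lemma card_not_hasDiscrepancyAt_le (hd₁ : 0 < d₁) (hd₂ : 0 < d₂) (hnm : n ≤ m)
    (hd₂n : 4 * d₂ ≤ n) {K : ℝ} (hK : 0 ≤ K) {S : Finset (Fin n)} {T : Finset (Fin m)}
    (hS : S.Nonempty) (hT : T.Nonempty) :
    (((BBG n m d₁ d₂).filter fun X =>
        ¬HasDiscrepancyAt (biadj X) (d₂ / n) (16 * (K + 4)) S T).card : ℝ) ≤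
      (m : ℝ) ^ (-(K + 2)) * (Real.exp (-logChooseBound m S.card) *
        Real.exp (-logChooseBound m T.card)) * (BBG n m d₁ d₂).card := by
  have hp : (0 : ℝ) < d₂ / n :=
    div_pos (by exact_mod_cast hd₂) (by exact_mod_cast (by omega : 0 < n))
  have hS₁ : (1 : ℝ) ≤ S.card := by exact_mod_cast Finset.card_pos.2 hS
  have hT₁ : (1 : ℝ) ≤ T.card := by exact_mod_cast Finset.card_pos.2 hT
  have hSm : (S.card : ℝ) ≤ m := by exact_mod_cast (card_finset_fin_le S).trans hnm
  have hTm : (T.card : ℝ) ≤ m := by exact_mod_cast card_finset_fin_le T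
  have hμ : 0 < (d₂ / n : ℝ) * S.card * T.card :=
    mul_pos (mul_pos hp (one_pos.trans_le hS₁)) (one_pos.trans_le hT₁)
  simp only [HasDiscrepancyAt, Classical.not_imp, not_le, Fintype.card_fin]
  exact (card_discrepancy_violation_le hd₁ hd₂n hμ rfl _).trans
    (mul_le_mul_of_nonneg_right (exp_neg_logChooseBound_max_le hK hS₁ hT₁ hSm hTm)
      (Nat.cast_nonneg _))

lemma card_not_hasDiscrepancy_le (hd₁ : 0 < d₁) (hd₂ : 0 < d₂) (hnm : n ≤ m)
    (hd₂n : 4 * d₂ ≤ n) {K : ℝ} (hK : 0 ≤ K) :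
    (((BBG n m d₁ d₂).filter fun X =>
        ¬HasDiscrepancy (biadj X) (d₂ / n) (16 * (K + 4))).card : ℝ) ≤
      (m : ℝ) ^ (-K) * (BBG n m d₁ d₂).card := by
  have hm : 0 < m := by omega
  have hm' : (0 : ℝ) < m := by exact_mod_cast hm
  set bad : Finset (Fin n) → Finset (Fin m) → Finset (Fin n → Fin m → Bool) := fun S T =>
    (BBG n m d₁ d₂).filter fun X => ¬HasDiscrepancyAt (biadj X) (d₂ / n) (16 * (K + 4)) S T
  have union : ((BBG n m d₁ d₂).filter fun X =>
      ¬HasDiscrepancy (biadj X) (d₂ / n) (16 * (K + 4))) ⊆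
      (Finset.univ.filter Finset.Nonempty).biUnion fun S =>
        (Finset.univ.filter Finset.Nonempty).biUnion fun T => bad S T := fun X hX => by
    obtain ⟨hXG, hX⟩ := Finset.mem_filter.1 hX
    simp only [HasDiscrepancy, not_forall] at hX
    obtain ⟨S, T, hS, hT, violation⟩ := hX
    simp only [Finset.mem_biUnion, Finset.mem_filter, Finset.mem_univ, true_and]
    exact ⟨S, hS, T, hT, Finset.mem_filter.2 ⟨hXG, violation⟩⟩
  have rows := sum_exp_neg_logChooseBound_le (α := Fin n) hm (by rwa [Fintype.card_fin])
  have cols := sum_exp_neg_logChooseBound_le (α := Fin m) hm (by rw [Fintype.card_fin])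
  rw [Fintype.card_fin] at rows cols
  calc _ ≤ ∑ S : Finset (Fin n) with S.Nonempty, ∑ T : Finset (Fin m) with T.Nonempty,
        ((bad S T).card : ℝ) := by
        exact_mod_cast (Finset.card_le_card union).trans (Finset.card_biUnion_le.trans
          (Finset.sum_le_sum fun S _ => Finset.card_biUnion_le))
    _ ≤ _ := Finset.sum_le_sum fun S hS => Finset.sum_le_sum fun T hT =>
        card_not_hasDiscrepancyAt_le hd₁ hd₂ hnm hd₂n hK (Finset.mem_filter.1 hS).2
          (Finset.mem_filter.1 hT).2
    _ = (m : ℝ) ^ (-(K + 2)) * ((∑ S : Finset (Fin n) with S.Nonempty,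
          Real.exp (-logChooseBound m S.card)) * ∑ T : Finset (Fin m) with T.Nonempty,
          Real.exp (-logChooseBound m T.card)) * (BBG n m d₁ d₂).card := by
        rw [Finset.sum_mul_sum]
        simp only [Finset.sum_mul, Finset.mul_sum]
    _ ≤ (m : ℝ) ^ (-(K + 2)) * (m * m) * (BBG n m d₁ d₂).card := by
        gcongr
        exact rows.trans (by exact_mod_cast hnm)
    _ = (m : ℝ) ^ (-K) * (BBG n m d₁ d₂).card := by
        rw [← sq, ← Real.rpow_natCast, ← Real.rpow_add hm']
        norm_num

end DiscrepancyTail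

/-! ### Heavy entries -/

section DiscrepancyCases

variable {N t e μ B r η : ℝ}

/-- Compare `1 + log (N / t)` with `4 log (e / μ)`: if it is smaller, it cancels in the discrepancy
inequality, otherwise `e / μ` is at most of order `(N / t) ^ (1 / 4)`. -/
lemma edgeCount_cases_of_discrepancy (hμ : 0 < μ) (ht : 0 < t) (htN : t ≤ N) (he : 0 ≤ e)
    (hB : 16 * μ ≤ e → e * Real.log (e / μ) ≤ B * logChooseBound N t) :
    e ≤ 16 * μ ∨ e ≤ 4 * B * t ∨
      (e / μ) ^ 4 ≤ 3 * (N / t) ∧ e ≤ B * logChooseBound N t := by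
  refine or_iff_not_imp_left.2 fun not_few => ?_
  have many : 16 * μ ≤ e := (not_le.1 not_few).le
  have hr : 16 ≤ e / μ := (le_div_iff₀ hμ).2 many
  have hNt : 1 ≤ N / t := (one_le_div ht).2 htN
  have log_Nt : 0 ≤ Real.log (N / t) := Real.log_nonneg hNt
  have exp_one := Real.exp_one_lt_d9
  have log_r : 1 ≤ Real.log (e / μ) := by
    rw [Real.le_log_iff_exp_le (by linarith)]
    linarith
  have discrepancy := hB many
  rcases le_total (1 + Real.log (N / t)) (4 * Real.log (e / μ)) with small | large
  · refine .inl (le_of_mul_le_mul_right ?_ (show 0 < 1 + Real.log (N / t) by linarith))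
    unfold logChooseBound at discrepancy
    linarith [mul_le_mul_of_nonneg_left small he]
  · refine .inr ⟨?_, (le_mul_of_one_le_right he log_r).trans discrepancy⟩
    have log_le : Real.log ((e / μ) ^ 4) ≤ Real.log (Real.exp 1 * (N / t)) := by
      rw [Real.log_pow, Real.log_mul (Real.exp_pos 1).ne' (by linarith), Real.log_exp]
      exact_mod_cast large
    have pow_le := (Real.log_le_log_iff (pow_pos (by linarith) 4)
      (mul_pos (Real.exp_pos 1) (by linarith))).1 log_le
    exact pow_le.trans (mul_le_mul_of_nonneg_right (by linarith) (by linarith))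

lemma ratio_mul_le_four (ht : 0 < t) (hr : r ^ 4 ≤ 3 * (N / t))
    (hη : t * η ^ 2 ≤ 4) (hNη : N * t * η ^ 4 ≤ 1) : r * (t * η ^ 2) ≤ 4 := by
  have fourth_power : (r * (t * η ^ 2)) ^ 4 ≤ 4 ^ 4 :=
    calc (r * (t * η ^ 2)) ^ 4 = r ^ 4 * (t * η ^ 2) ^ 4 := mul_pow _ _ _
      _ ≤ 3 * (N / t) * (t * η ^ 2) ^ 4 := by gcongr
      _ = 3 * (N * t * η ^ 4) * (t * η ^ 2) ^ 2 := by field_simp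
      _ ≤ 3 * 1 * 4 ^ 2 := by gcongr
      _ ≤ 4 ^ 4 := by norm_num
  exact le_of_pow_le_pow_left₀ four_ne_zero (by norm_num) fourth_power

lemma div_le_sqrt_mul_pow_four (ht : 0 < t) (hN : 0 ≤ N) (hNη : 1 ≤ N * t * η ^ 4) :
    N / t ≤ (√N * η) ^ 4 := by
  have sqrt_pow : √N ^ 4 = N ^ 2 := by
    rw [show 4 = 2 * 2 from rfl, pow_mul, Real.sq_sqrt hN]
  rw [mul_pow, sqrt_pow, div_le_iff₀ ht]
  nlinarith

lemma ratio_le_two_mul_sqrt_mul (hη : 0 ≤ η) (hr : r ^ 4 ≤ 3 * (N / t))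
    (hNt : N / t ≤ (√N * η) ^ 4) : r ≤ 2 * (√N * η) := by
  have hx : 0 ≤ √N * η := mul_nonneg (Real.sqrt_nonneg N) hη
  refine le_of_pow_le_pow_left₀ four_ne_zero (by linarith) ?_
  rw [mul_pow]
  linarith [pow_nonneg hx 4]

lemma logChooseBound_le_of_div_le (ht : 0 < t) (hN : 0 < N) (hη : 0 < η)
    (hNt : N / t ≤ (√N * η) ^ 4) : logChooseBound N t ≤ 4 * t * (√N * η) := by
  have hx : 0 < √N * η := mul_pos (Real.sqrt_pos.2 hN) hη
  have log_le : Real.log (N / t) ≤ 4 * Real.log (√N * η) := by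
    exact_mod_cast (Real.log_le_log (div_pos hN ht) hNt).trans_eq (Real.log_pow _ _)
  unfold logChooseBound
  nlinarith [Real.log_le_sub_one_of_pos hx]

end DiscrepancyCases

/-- A bound for the contribution to the heavy part of a pair of level sets of sizes `s`, `t` and
heights `ξ`, `η`, in terms of their masses `α = s ξ²`, `β = t η²`. Its four terms come from
the cases in which the discrepancy inequality can be exploited. -/
def levelPairBound (κ a N ξ α η β : ℝ) : ℝ :=
  16 * (α * β) + 4 * κ * β / (N * a * η) * ξ + 4 * a * α / ξ * η⁻¹ +
    if ξ ≤ 2 * √N * a then 4 * κ * β / (√N * a) * ξ else 0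

section LevelPair

variable {D κ a N s t e ξ η α β x : ℝ}

lemma le_levelPairBound (hκ : 0 ≤ κ) (ha : 0 ≤ a) (hN : 0 ≤ N) (hξ : 0 ≤ ξ) (hα : 0 ≤ α)
    (hη : 0 ≤ η) (hβ : 0 ≤ β)
    (hx : x ≤ 16 * (α * β) ∨ x ≤ 4 * κ * β / (N * a * η) * ξ ∨ x ≤ 4 * a * α / ξ * η⁻¹ ∨
      ξ ≤ 2 * √N * a ∧ x ≤ 4 * κ * β / (√N * a) * ξ) :
    x ≤ levelPairBound κ a N ξ α η β := by
  have h₁ : 0 ≤ 16 * (α * β) := by positivity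
  have h₂ : 0 ≤ 4 * κ * β / (N * a * η) * ξ := by positivity
  have h₃ : 0 ≤ 4 * a * α / ξ * η⁻¹ := by positivity
  have h₄ : 0 ≤ 4 * κ * β / (√N * a) * ξ := by positivity
  unfold levelPairBound
  rcases hx with hx | hx | hx | ⟨hξN, hx⟩
  · split_ifs <;> linarith
  · split_ifs <;> linarith
  · split_ifs <;> linarith
  · rw [if_pos hξN]
    linarith

lemma levelPairBound_nonneg (hκ : 0 ≤ κ) (ha : 0 ≤ a) (hN : 0 ≤ N) (hξ : 0 ≤ ξ) (hα : 0 ≤ α)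
    (hη : 0 ≤ η) (hβ : 0 ≤ β) : 0 ≤ levelPairBound κ a N ξ α η β :=
  le_levelPairBound hκ ha hN hξ hα hη hβ (.inl (by positivity))

lemma mul_le_levelPairBound (hD : 0 < D) (hκ : 0 ≤ κ) (ha : 0 < a) (hξ : 0 < ξ) (hη : 0 < η)
    (hs : 0 < s) (ht : 0 < t) (htN : t ≤ N) (he : 0 ≤ e) (haξη : a ≤ ξ * η)
    (htη : t * η ^ 2 ≤ 4)
    (H : 16 * (D * a * s * t) ≤ e →
      e * Real.log (e / (D * a * s * t)) ≤ κ * (D / (N * a)) * logChooseBound N t) :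
    ξ * η * e ≤ D * levelPairBound κ a N ξ (s * ξ ^ 2) η (t * η ^ 2) := by
  have hN : 0 < N := ht.trans_le htN
  have hsN₂ : √N ^ 2 = N := Real.sq_sqrt hN.le
  have hμ : 0 < D * a * s * t := mul_pos (mul_pos (mul_pos hD ha) hs) ht
  have hξη : 0 < ξ * η := mul_pos hξ hη
  have dense (h : e ≤ 16 * (D * (ξ * η) * s * t)) :
      ξ * η * e / D ≤ 16 * ((s * ξ ^ 2) * (t * η ^ 2)) := by
    rw [div_le_iff₀ hD]
    nlinarith [mul_le_mul_of_nonneg_left h hξη.le]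
  rw [← div_le_iff₀' hD]
  refine le_levelPairBound hκ ha.le hN.le hξ.le (by positivity) hη.le (by positivity) ?_
  rcases edgeCount_cases_of_discrepancy hμ ht htN he H with few | cancel | ⟨ratio, edges⟩
  · exact .inl (dense (few.trans (by gcongr)))
  · refine .inr (.inl ?_)
    calc ξ * η * e / D ≤ ξ * η * (4 * (κ * (D / (N * a))) * t) / D := by gcongr
      _ = 4 * κ * (t * η ^ 2) / (N * a * η) * ξ := by field_simp
  rcases le_total (N * t * η ^ 4) 1 with thin | thick
  · refine .inr (.inr (.inl ?_))
    have := ratio_mul_le_four ht ratio htη thin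
    calc ξ * η * e / D = e / (D * a * s * t) * (t * η ^ 2) * (a * (s * ξ ^ 2) / ξ * η⁻¹) := by
          field_simp
      _ ≤ 4 * (a * (s * ξ ^ 2) / ξ * η⁻¹) := by gcongr
      _ = 4 * a * (s * ξ ^ 2) / ξ * η⁻¹ := by ring
  have hNt := div_le_sqrt_mul_pow_four ht hN.le thick
  have ratio_le := ratio_le_two_mul_sqrt_mul hη.le ratio hNt
  rcases le_total ξ (2 * √N * a) with low | high
  · refine .inr (.inr (.inr ⟨low, ?_⟩))
    have choose_le := logChooseBound_le_of_div_le ht hN hη hNt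
    calc ξ * η * e / D ≤ ξ * η * (κ * (D / (N * a)) * (4 * t * (√N * η))) / D := by
          gcongr
          exact edges.trans (by gcongr)
      _ = 4 * κ * (t * η ^ 2) * √N / (√N ^ 2 * a) * ξ := by rw [hsN₂]; field_simp
      _ = 4 * κ * (t * η ^ 2) / (√N * a) * ξ := by field_simp
  · refine .inl (dense ?_)
    rw [div_le_iff₀ hμ] at ratio_le
    calc e ≤ 2 * (√N * η) * (D * a * s * t) := ratio_le
      _ = 1 * (D * (2 * √N * a * η) * s * t) := by ring
      _ ≤ 16 * (D * (ξ * η) * s * t) := by gcongr; norm_num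

end LevelPair

section LevelSum

lemma sum_half_pow_le (s : Finset ℕ) {R : ℝ} (hR : 0 ≤ R) (hs : ∀ k ∈ s, (1 / 2 : ℝ) ^ k ≤ R) :
    ∑ k ∈ s, (1 / 2 : ℝ) ^ k ≤ 2 * R := by
  rcases s.eq_empty_or_nonempty with rfl | hne
  · simpa using hR
  calc ∑ k ∈ s, (1 / 2 : ℝ) ^ k
      ≤ ∑ k ∈ Finset.Ico (s.min' hne) (s.max' hne + 1), (1 / 2 : ℝ) ^ k :=
        Finset.sum_le_sum_of_subset_of_nonneg
          (fun k hk => Finset.mem_Ico.2 ⟨s.min'_le k hk, Nat.lt_succ_of_le (s.le_max' k hk)⟩)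
          (fun k _ _ => by positivity)
    _ ≤ (1 / 2) ^ s.min' hne / (1 - 1 / 2) :=
        geom_sum_Ico_le_of_lt_one (by norm_num) (by norm_num)
    _ ≤ 2 * R := by
        rw [div_le_iff₀ (by norm_num)]
        linarith [hs _ (s.min'_mem hne)]

lemma sum_inv_half_pow_le (s : Finset ℕ) {R : ℝ} (hR : 0 ≤ R)
    (hs : ∀ k ∈ s, ((1 / 2 : ℝ) ^ k)⁻¹ ≤ R) : ∑ k ∈ s, ((1 / 2 : ℝ) ^ k)⁻¹ ≤ 2 * R := by
  simp only [one_div, inv_pow, inv_inv] at hs ⊢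
  rcases s.eq_empty_or_nonempty with rfl | hne
  · simpa using hR
  have sum_lt : ∑ k ∈ s, 2 ^ k < 2 ^ (s.max' hne + 1) :=
    Nat.geomSum_lt le_rfl fun k hk => Nat.lt_succ_of_le (s.le_max' k hk)
  calc ∑ k ∈ s, (2 : ℝ) ^ k ≤ 2 ^ (s.max' hne + 1) := by exact_mod_cast sum_lt.le
    _ ≤ 2 * R := by linarith [hs _ (s.max'_mem hne), pow_succ (2 : ℝ) (s.max' hne)]

variable {s : Finset ℕ} {α β : ℕ → ℝ}

/-- For each `l` the sum over `k` is geometric, hence comparable with its largest term `R l`. -/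
lemma sum_sum_filter_mul_le {z f R w : ℕ → ℝ} {C : ℝ} {Q : ℕ → ℕ → Prop}
    [∀ k l, Decidable (Q k l)]
    (hz : ∀ (s : Finset ℕ) {R : ℝ}, 0 ≤ R → (∀ k ∈ s, z k ≤ R) → ∑ k ∈ s, z k ≤ 2 * R)
    (hf : ∀ l, 0 ≤ f l) (hR : ∀ l, 0 ≤ R l) (hC : 0 ≤ C) (hfR : ∀ l, f l * R l = C * w l)
    (hw : ∑ l ∈ s, w l ≤ 4) (hQ : ∀ k l, Q k l → z k ≤ R l) :
    ∑ l ∈ s, ∑ k ∈ s with Q k l, f l * z k ≤ 8 * C := by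
  have inner (l : ℕ) : ∑ k ∈ s with Q k l, f l * z k ≤ 2 * C * w l :=
    calc ∑ k ∈ s with Q k l, f l * z k ≤ f l * (2 * R l) := by
          rw [← Finset.mul_sum]
          exact mul_le_mul_of_nonneg_left
            (hz _ (hR l) fun k hk => hQ k l (Finset.mem_filter.1 hk).2) (hf l)
      _ = 2 * C * w l := by linarith [hfR l]
  refine (Finset.sum_le_sum fun l _ => inner l).trans ?_
  rw [← Finset.mul_sum]
  nlinarith

lemma sum_sum_filter_mul_le_sum_mul_sum {P : ℕ → ℕ → Prop} (hα : ∀ k, 0 ≤ α k)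
    (hβ : ∀ k, 0 ≤ β k) :
    ∑ k ∈ s, ∑ l ∈ s with P k l, α k * β l ≤ (∑ k ∈ s, α k) * ∑ l ∈ s, β l := by
  rw [Finset.sum_mul_sum]
  exact Finset.sum_le_sum fun k _ => Finset.sum_le_sum_of_subset_of_nonneg
    (Finset.filter_subset _ _) fun l _ _ => mul_nonneg (hα k) (hβ l)

lemma sum_levelPairBound_le {κ a N : ℝ} (hκ : 0 ≤ κ) (ha : 0 < a) (hN : 0 < N)
    (hα : ∀ k, 0 ≤ α k) (hβ : ∀ k, 0 ≤ β k) (hα₄ : ∑ k ∈ s, α k ≤ 4)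
    (hβ₄ : ∑ k ∈ s, β k ≤ 4) {P : ℕ → ℕ → Prop}
    (hP : ∀ k l, P k l → a ≤ (1 / 2 : ℝ) ^ k * (1 / 2 : ℝ) ^ l)
    (hP' : ∀ k l, P k l → (1 / 2 : ℝ) ^ k ≤ 2 * (1 / 2 : ℝ) ^ l * (N * a)) :
    ∑ k ∈ s, ∑ l ∈ s with P k l,
      levelPairBound κ a N ((1 / 2 : ℝ) ^ k) (α k) ((1 / 2 : ℝ) ^ l) (β l) ≤ 288 + 128 * κ := by
  set z : ℕ → ℝ := fun k => (1 / 2 : ℝ) ^ k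
  have hz (k : ℕ) : 0 < z k := by positivity
  have swap (F : ℕ → ℕ → ℝ) :
      ∑ k ∈ s, ∑ l ∈ s with P k l, F k l = ∑ l ∈ s, ∑ k ∈ s with P k l, F k l := by
    simp only [Finset.sum_filter]
    exact Finset.sum_comm
  have sum₁ : ∑ k ∈ s, ∑ l ∈ s with P k l, 16 * (α k * β l) ≤ 16 * (4 * 4) := by
    have := (sum_sum_filter_mul_le_sum_mul_sum (P := P) hα hβ).trans
      (mul_le_mul hα₄ hβ₄ (Finset.sum_nonneg fun l _ => hβ l) (by norm_num))
    simpa only [Finset.mul_sum] using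
      mul_le_mul_of_nonneg_left this (show (0 : ℝ) ≤ 16 by norm_num)
  have sum₂ : ∑ k ∈ s, ∑ l ∈ s with P k l, 4 * κ * β l / (N * a * z l) * z k ≤ 8 * (8 * κ) := by
    rw [swap]
    refine sum_sum_filter_mul_le (R := fun l => 2 * z l * (N * a)) sum_half_pow_le
      (fun l => ?_) (fun l => ?_) (by linarith) (fun l => ?_) hβ₄ hP'
    · exact div_nonneg (mul_nonneg (by linarith) (hβ l)) (by positivity)
    · positivity
    · field_simp [(hz l).ne']
      ring
  have sum₃ : ∑ k ∈ s, ∑ l ∈ s with P k l, 4 * a * α k / z k * (z l)⁻¹ ≤ 8 * 4 := by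
    refine sum_sum_filter_mul_le (R := fun k => z k / a) sum_inv_half_pow_le
      (fun k => ?_) (fun k => ?_) (by norm_num) (fun k => ?_) hα₄ fun l k hkl => ?_
    · exact div_nonneg (mul_nonneg (by linarith) (hα k)) (hz k).le
    · positivity
    · field_simp [(hz k).ne']
    · rw [le_div_iff₀ ha, inv_mul_le_iff₀ (hz l), mul_comm]
      exact hP k l hkl
  have sum₄ : ∑ k ∈ s, ∑ l ∈ s with P k l,
      (if z k ≤ 2 * √N * a then 4 * κ * β l / (√N * a) * z k else 0) ≤ 8 * (8 * κ) := by
    rw [swap]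
    simp only [← Finset.sum_filter, Finset.filter_filter]
    refine sum_sum_filter_mul_le (f := fun l => 4 * κ * β l / (√N * a))
      (Q := fun k l => P k l ∧ z k ≤ 2 * √N * a) (R := fun _ => 2 * √N * a) sum_half_pow_le
      (fun l => ?_) (fun _ => ?_) (by linarith) (fun l => ?_) hβ₄ fun k l h => h.2
    · exact div_nonneg (mul_nonneg (by linarith) (hβ l)) (by positivity)
    · positivity
    · field_simp
      ring
  simp only [levelPairBound, Finset.sum_add_distrib]
  refine (add_le_add (add_le_add (add_le_add sum₁ sum₂) sum₃) sum₄).trans ?_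
  linarith

end LevelSum

section DyadicLevel

variable {ι α β : Type*} [Fintype ι] [Fintype α] [Fintype β]

/-- The `k`-th dyadic level set of `x`, on which `x` agrees with `2⁻ᵏ` up to a factor 2. -/
def dyadicLevel (x : ι → ℝ) (k : ℕ) : Finset ι :=
  Finset.univ.filter fun u => (1 / 2 : ℝ) ^ (k + 1) < x u ∧ x u ≤ (1 / 2 : ℝ) ^ k

variable {x : ι → ℝ} {u : ι} {k : ℕ}

lemma mem_dyadicLevel :
    u ∈ dyadicLevel x k ↔ (1 / 2 : ℝ) ^ (k + 1) < x u ∧ x u ≤ (1 / 2 : ℝ) ^ k := by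
  simp [dyadicLevel]

lemma half_pow_lt_two_mul_of_mem_dyadicLevel (hu : u ∈ dyadicLevel x k) :
    (1 / 2 : ℝ) ^ k < 2 * x u := by
  linarith [(mem_dyadicLevel.1 hu).1, pow_succ (1 / 2 : ℝ) k]

lemma pairwiseDisjoint_dyadicLevel (x : ι → ℝ) (s : Set ℕ) :
    s.PairwiseDisjoint (dyadicLevel x) := by
  have disjoint_of_lt {k l : ℕ} (hkl : k < l) : Disjoint (dyadicLevel x k) (dyadicLevel x l) :=
    Finset.disjoint_left.2 fun u hk hl => by
      have : (1 / 2 : ℝ) ^ l ≤ (1 / 2) ^ (k + 1) :=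
        pow_le_pow_of_le_one (by norm_num) (by norm_num) hkl
      linarith [(mem_dyadicLevel.1 hk).1, (mem_dyadicLevel.1 hl).2]
  intro k _ l _ hkl
  exact hkl.lt_or_gt.elim disjoint_of_lt fun h => (disjoint_of_lt h).symm

lemma exists_forall_mem_dyadicLevel (hx : ∀ u, x u ≤ 1) :
    ∃ (k : ι → ℕ) (L : ℕ), (∀ u, k u < L) ∧ ∀ u, 0 < x u → u ∈ dyadicLevel x (k u) := by
  have each (u : ι) : ∃ k, 0 < x u → u ∈ dyadicLevel x k := by
    rcases lt_or_ge 0 (x u) with hu | hu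
    · obtain ⟨k, hk⟩ := exists_nat_pow_near_of_lt_one hu (hx u) (y := 1 / 2)
        (by norm_num) (by norm_num)
      exact ⟨k, fun _ => mem_dyadicLevel.2 hk⟩
    · exact ⟨0, fun hu' => absurd hu' hu.not_gt⟩
  choose k hk using each
  exact ⟨k, Finset.univ.sup k + 1,
    fun u => Nat.lt_succ_of_le (Finset.le_sup (Finset.mem_univ u)), hk⟩

lemma sum_card_dyadicLevel_mul_sq_le (hx : ∑ u, x u ^ 2 ≤ 1) (s : Finset ℕ) :
    ∑ k ∈ s, ((dyadicLevel x k).card : ℝ) * ((1 / 2 : ℝ) ^ k) ^ 2 ≤ 4 := by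
  have each (k : ℕ) : ((dyadicLevel x k).card : ℝ) * ((1 / 2 : ℝ) ^ k) ^ 2 ≤
      ∑ u ∈ dyadicLevel x k, 4 * x u ^ 2 := by
    rw [← nsmul_eq_mul]
    refine Finset.card_nsmul_le_sum _ _ _ fun u hu => ?_
    have := half_pow_lt_two_mul_of_mem_dyadicLevel hu
    nlinarith [pow_pos (show (0 : ℝ) < 1 / 2 by norm_num) k]
  calc _ ≤ ∑ k ∈ s, ∑ u ∈ dyadicLevel x k, 4 * x u ^ 2 := Finset.sum_le_sum fun k _ => each k
    _ = ∑ u ∈ s.biUnion (dyadicLevel x), 4 * x u ^ 2 :=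
        (Finset.sum_biUnion (pairwiseDisjoint_dyadicLevel x s)).symm
    _ ≤ ∑ u, 4 * x u ^ 2 := Finset.sum_le_sum_of_subset_of_nonneg (Finset.subset_univ _)
        fun u _ _ => by positivity
    _ ≤ 4 := by
        rw [← Finset.mul_sum]
        linarith

lemma card_dyadicLevel_mul_sq_le (hx : ∑ u, x u ^ 2 ≤ 1) (k : ℕ) :
    ((dyadicLevel x k).card : ℝ) * ((1 / 2 : ℝ) ^ k) ^ 2 ≤ 4 := by
  simpa using sum_card_dyadicLevel_mul_sq_le hx {k}

lemma le_one_of_sum_sq_le (hx : ∑ u, x u ^ 2 ≤ 1) (u : ι) : x u ≤ 1 := by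
  have := Finset.single_le_sum (fun u _ => sq_nonneg (x u)) (Finset.mem_univ u)
  nlinarith

variable {A : Matrix α β ℝ} {x : α → ℝ} {y : β → ℝ}

lemma sum_le_half_pow_mul_edgeCount (hA : ∀ u v, 0 ≤ A u v) {k l : ℕ} {W : Finset (α × β)}
    (hW : ∀ q ∈ W, q.1 ∈ dyadicLevel x k ∧ q.2 ∈ dyadicLevel y l) :
    ∑ q ∈ W, x q.1 * y q.2 * A q.1 q.2 ≤
      (1 / 2 : ℝ) ^ k * (1 / 2) ^ l * edgeCount A (dyadicLevel x k) (dyadicLevel y l) := by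
  have edgeCount_eq : edgeCount A (dyadicLevel x k) (dyadicLevel y l) =
      ∑ q ∈ dyadicLevel x k ×ˢ dyadicLevel y l, A q.1 q.2 :=
    (Finset.sum_product _ _ fun q => A q.1 q.2).symm
  rw [edgeCount_eq, Finset.mul_sum]
  calc _ ≤ ∑ q ∈ W, (1 / 2 : ℝ) ^ k * (1 / 2) ^ l * A q.1 q.2 := Finset.sum_le_sum fun q hq => by
        obtain ⟨hx, hy⟩ := hW q hq
        have hy₀ : 0 ≤ y q.2 := le_trans (by positivity) (mem_dyadicLevel.1 hy).1.le
        exact mul_le_mul_of_nonneg_right (mul_le_mul (mem_dyadicLevel.1 hx).2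
          (mem_dyadicLevel.1 hy).2 hy₀ (by positivity)) (hA q.1 q.2)
    _ ≤ _ := Finset.sum_le_sum_of_subset_of_nonneg
        (fun q hq => Finset.mem_product.2 (hW q hq))
        fun q _ _ => mul_nonneg (by positivity) (hA q.1 q.2)

/-- `P` is the trace of the condition `C` on the pairs of levels. -/
lemma exists_sum_filter_le_sum_dyadicLevel (hA : ∀ u v, 0 ≤ A u v) (hx : ∀ u, x u ≤ 1)
    (hy : ∀ v, y v ≤ 1) {C : α → β → Prop} (hCx : ∀ u v, C u v → 0 < x u)
    (hCy : ∀ u v, C u v → 0 < y v) {P : ℕ → ℕ → Prop}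
    (hCP : ∀ u v k l, C u v → u ∈ dyadicLevel x k → v ∈ dyadicLevel y l → P k l) :
    ∃ L, ∑ q : α × β with C q.1 q.2, x q.1 * y q.2 * A q.1 q.2 ≤
      ∑ k ∈ Finset.range L, ∑ l ∈ Finset.range L with P k l,
        (1 / 2 : ℝ) ^ k * (1 / 2) ^ l * edgeCount A (dyadicLevel x k) (dyadicLevel y l) := by
  obtain ⟨kx, L₁, hL₁, hkx⟩ := exists_forall_mem_dyadicLevel hx
  obtain ⟨ky, L₂, hL₂, hky⟩ := exists_forall_mem_dyadicLevel hy
  refine ⟨max L₁ L₂, ?_⟩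
  set Λ := (Finset.range (max L₁ L₂) ×ˢ Finset.range (max L₁ L₂)).filter fun r => P r.1 r.2
    with hΛ
  have maps_to : ∀ q ∈ Finset.univ.filter fun q : α × β => C q.1 q.2, (kx q.1, ky q.2) ∈ Λ :=
    fun q hq => by
      have hC := (Finset.mem_filter.1 hq).2
      rw [hΛ, Finset.mem_filter, Finset.mem_product, Finset.mem_range, Finset.mem_range]
      exact ⟨⟨(hL₁ q.1).trans_le (le_max_left _ _), (hL₂ q.2).trans_le (le_max_right _ _)⟩,
        hCP _ _ _ _ hC (hkx _ (hCx _ _ hC)) (hky _ (hCy _ _ hC))⟩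
  rw [← Finset.sum_fiberwise_of_maps_to maps_to]
  refine (Finset.sum_le_sum fun r _ =>
    sum_le_half_pow_mul_edgeCount hA (k := r.1) (l := r.2) fun q hq => ?_).trans_eq ?_
  · obtain ⟨hqC, rfl⟩ := Finset.mem_filter.1 hq
    have hC := (Finset.mem_filter.1 hqC).2
    exact ⟨hkx _ (hCx _ _ hC), hky _ (hCy _ _ hC)⟩
  · simp only [hΛ, Finset.sum_filter, Finset.sum_product]

end DyadicLevel

section HeavyBound

variable {α β : Type*} [Fintype α] [Fintype β]

lemma logChooseBound_le_div_mul_logChooseBound {n m s : ℝ} (hs : 0 < s) (hsn : s ≤ n)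
    (hnm : n ≤ m) : logChooseBound m s ≤ m / n * logChooseBound n s := by
  have hn : 0 < n := hs.trans_le hsn
  have hm : 0 < m := hn.trans_le hnm
  have split : Real.log (m / s) = Real.log (m / n) + Real.log (n / s) := by
    rw [← Real.log_mul (div_pos hm hn).ne' (div_pos hn hs).ne', div_mul_div_cancel₀ hn.ne']
  have log_mn : Real.log (m / n) ≤ m / n - 1 := Real.log_le_sub_one_of_pos (div_pos hm hn)
  have log_ns : 0 ≤ Real.log (n / s) := Real.log_nonneg ((one_le_div hs).2 hsn)
  have one_le : 1 ≤ m / n := (one_le_div hn).2 hnm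
  have factor : 1 + Real.log (m / s) ≤ m / n * (1 + Real.log (n / s)) := by
    nlinarith [mul_nonneg (sub_nonneg.2 one_le) log_ns]
  unfold logChooseBound
  linarith [mul_le_mul_of_nonneg_left factor hs.le]

variable {A : Matrix α β ℝ} {r c κ a : ℝ}

lemma mul_edgeCount_le_levelPairBound (hA : ∀ u v, 0 ≤ A u v)
    (hαβ : Fintype.card α ≤ Fintype.card β) (ha : 0 < a) (hκ : 0 ≤ κ)
    (hdisc : HasDiscrepancy A (Fintype.card β * a * a) κ) {S : Finset α} {T : Finset β}
    {ξ η : ℝ} (hξ : 0 < ξ) (hη : 0 < η) (haξη : a ≤ ξ * η) (hSξ : S.card * ξ ^ 2 ≤ 4)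
    (hTη : T.card * η ^ 2 ≤ 4) :
    ξ * η * edgeCount A S T ≤ Fintype.card β * a *
      (levelPairBound κ a (Fintype.card β) ξ (S.card * ξ ^ 2) η (T.card * η ^ 2)
        + levelPairBound κ a (Fintype.card α) η (T.card * η ^ 2) ξ (S.card * ξ ^ 2)) := by
  have hS₀ : 0 ≤ S.card * ξ ^ 2 := by positivity
  have hT₀ : 0 ≤ T.card * η ^ 2 := by positivity
  have bound₁ := levelPairBound_nonneg hκ ha.le (Nat.cast_nonneg (Fintype.card β)) hξ.le hS₀
    hη.le hT₀
  have bound₂ := levelPairBound_nonneg hκ ha.le (Nat.cast_nonneg (Fintype.card α)) hη.le hT₀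
    hξ.le hS₀
  rcases S.eq_empty_or_nonempty with rfl | hS
  · simp only [edgeCount, Finset.sum_empty, mul_zero]
    exact mul_nonneg (by positivity) (add_nonneg bound₁ bound₂)
  rcases T.eq_empty_or_nonempty with rfl | hT
  · simp only [edgeCount, Finset.sum_empty, Finset.sum_const_zero, mul_zero]
    exact mul_nonneg (by positivity) (add_nonneg bound₁ bound₂)
  have hs : (0 : ℝ) < S.card := by exact_mod_cast hS.card_pos
  have ht : (0 : ℝ) < T.card := by exact_mod_cast hT.card_pos
  have hsα : (S.card : ℝ) ≤ Fintype.card α := by exact_mod_cast S.card_le_univ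
  have htβ : (T.card : ℝ) ≤ Fintype.card β := by exact_mod_cast T.card_le_univ
  have hβ : (0 : ℝ) < Fintype.card β := ht.trans_le htβ
  have hD : 0 < Fintype.card β * a := mul_pos hβ ha
  have he : 0 ≤ edgeCount A S T := Finset.sum_nonneg fun u _ => Finset.sum_nonneg fun v _ => hA u v
  have disc := hdisc S T hS hT
  unfold HasDiscrepancyAt at disc
  rw [mul_add]
  rcases le_total (S.card : ℝ) T.card with hST | hTS
  · rw [max_eq_right hST] at disc
    refine le_add_of_le_of_nonneg (mul_le_levelPairBound hD hκ ha hξ hη hs ht htβ he haξη hTη ?_)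
      (mul_nonneg hD.le bound₂)
    rwa [div_self hD.ne', mul_one]
  · rw [max_eq_left hTS] at disc
    refine le_add_of_nonneg_of_le (mul_nonneg hD.le bound₁) ?_
    rw [mul_comm ξ η] at haξη ⊢
    refine mul_le_levelPairBound hD hκ ha hη hξ ht hs hsα he haξη hSξ fun many => ?_
    rw [mul_right_comm _ (T.card : ℝ)] at many ⊢
    refine (disc many).trans ?_
    rw [mul_div_mul_right _ _ ha.ne', mul_assoc]
    exact mul_le_mul_of_nonneg_left
      (logChooseBound_le_div_mul_logChooseBound hs hsα (by exact_mod_cast hαβ)) hκ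

variable {x : α → ℝ} {y : β → ℝ}

lemma sum_half_pow_mul_edgeCount_le [Nonempty α] (hA : ∀ u v, 0 ≤ A u v)
    (hαβ : Fintype.card α ≤ Fintype.card β) (ha : 0 < a) (hκ : 0 ≤ κ)
    (hdisc : HasDiscrepancy A (Fintype.card β * a * a) κ) (hx : ∑ u, x u ^ 2 ≤ 1)
    (hy : ∑ v, y v ^ 2 ≤ 1) (s : Finset ℕ) {P : ℕ → ℕ → Prop}
    (hP : ∀ k l, P k l → a ≤ (1 / 2 : ℝ) ^ k * (1 / 2) ^ l)
    (hP₁ : ∀ k l, P k l → (1 / 2 : ℝ) ^ k ≤ 2 * (1 / 2) ^ l * (Fintype.card β * a))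
    (hP₂ : ∀ k l, P k l → (1 / 2 : ℝ) ^ l ≤ 2 * (1 / 2) ^ k * (Fintype.card α * a)) :
    ∑ k ∈ s, ∑ l ∈ s with P k l,
        (1 / 2 : ℝ) ^ k * (1 / 2) ^ l * edgeCount A (dyadicLevel x k) (dyadicLevel y l) ≤
      Fintype.card β * a * (2 * (288 + 128 * κ)) := by
  have hα : (0 : ℝ) < Fintype.card α := by exact_mod_cast Fintype.card_pos
  have hβ : (0 : ℝ) < Fintype.card β := hα.trans_le (by exact_mod_cast hαβ)
  have hα₀ (k : ℕ) : 0 ≤ ((dyadicLevel x k).card : ℝ) * ((1 / 2 : ℝ) ^ k) ^ 2 := by positivity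
  have hβ₀ (k : ℕ) : 0 ≤ ((dyadicLevel y k).card : ℝ) * ((1 / 2 : ℝ) ^ k) ^ 2 := by positivity
  have hα₄ := sum_card_dyadicLevel_mul_sq_le hx s
  have hβ₄ := sum_card_dyadicLevel_mul_sq_le hy s
  have sum₁ := sum_levelPairBound_le hκ ha hβ hα₀ hβ₀ hα₄ hβ₄ hP hP₁
  have sum₂ := sum_levelPairBound_le (P := fun l k => P k l) hκ ha hα hβ₀ hα₀ hβ₄ hα₄
    (fun l k h => (hP k l h).trans_eq (mul_comm _ _)) fun l k h => hP₂ k l h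
  simp only [Finset.sum_filter] at sum₁ sum₂ ⊢
  rw [Finset.sum_comm] at sum₂
  refine le_trans ?_ (mul_le_mul_of_nonneg_left
    ((add_le_add sum₁ sum₂).trans_eq (two_mul _).symm) (mul_pos hβ ha).le)
  simp only [← Finset.sum_add_distrib, Finset.mul_sum]
  refine Finset.sum_le_sum fun k _ => Finset.sum_le_sum fun l _ => ?_
  split_ifs with h
  · exact mul_edgeCount_le_levelPairBound hA hαβ ha hκ hdisc (by positivity) (by positivity)
      (hP k l h) (card_dyadicLevel_mul_sq_le hx k) (card_dyadicLevel_mul_sq_le hy l)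
  · simp

/-- The part of the heavy region in which neither factor dominates the other. -/
def IsBalanced (a : ℝ) (x : α → ℝ) (y : β → ℝ) (u : α) (v : β) : Prop :=
  a < x u * y v ∧ x u < y v * (Fintype.card β * a) ∧ y v < x u * (Fintype.card α * a)

lemma IsBalanced.pos_right {u : α} {v : β} (h : IsBalanced a x y u v) (ha : 0 < a)
    (hx₀ : 0 ≤ x u) : 0 < y v :=
  pos_of_mul_pos_right (ha.trans h.1) hx₀

lemma IsBalanced.pos_left {u : α} {v : β} (h : IsBalanced a x y u v) (ha : 0 < a)
    (hx₀ : 0 ≤ x u) : 0 < x u :=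
  pos_of_mul_pos_left (ha.trans h.1) (h.pos_right ha hx₀).le

lemma sum_isBalanced_le [Nonempty α] (hA : ∀ u v, 0 ≤ A u v)
    (hαβ : Fintype.card α ≤ Fintype.card β) (ha : 0 < a) (hκ : 0 ≤ κ)
    (hdisc : HasDiscrepancy A (Fintype.card β * a * a) κ) (hx₀ : ∀ u, 0 ≤ x u)
    (hx : ∑ u, x u ^ 2 ≤ 1) (hy : ∑ v, y v ^ 2 ≤ 1) :
    ∑ q : α × β with IsBalanced a x y q.1 q.2, x q.1 * y q.2 * A q.1 q.2 ≤
      Fintype.card β * a * (2 * (288 + 128 * κ)) := by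
  set P : ℕ → ℕ → Prop := fun k l => a ≤ (1 / 2 : ℝ) ^ k * (1 / 2) ^ l ∧
    (1 / 2 : ℝ) ^ k ≤ 2 * (1 / 2) ^ l * (Fintype.card β * a) ∧
    (1 / 2 : ℝ) ^ l ≤ 2 * (1 / 2) ^ k * (Fintype.card α * a)
  have levels (u : α) (v : β) (k l : ℕ) (h : IsBalanced a x y u v) (hu : u ∈ dyadicLevel x k)
      (hv : v ∈ dyadicLevel y l) : P k l := by
    have hu₁ := (mem_dyadicLevel.1 hu).2
    have hv₁ := (mem_dyadicLevel.1 hv).2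
    have hu₂ := half_pow_lt_two_mul_of_mem_dyadicLevel hu
    have hv₂ := half_pow_lt_two_mul_of_mem_dyadicLevel hv
    have hα : 0 ≤ Fintype.card α * a := by positivity
    have hβ : 0 ≤ Fintype.card β * a := by positivity
    refine ⟨h.1.le.trans (mul_le_mul hu₁ hv₁ (h.pos_right ha (hx₀ u)).le (by positivity)), ?_, ?_⟩
    · linarith [mul_le_mul_of_nonneg_right hv₁ hβ, h.2.1]
    · linarith [mul_le_mul_of_nonneg_right hu₁ hα, h.2.2]
  obtain ⟨L, hL⟩ := exists_sum_filter_le_sum_dyadicLevel hA (le_one_of_sum_sq_le hx)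
    (le_one_of_sum_sq_le hy) (fun u v h => h.pos_left ha (hx₀ u))
    (fun u v h => h.pos_right ha (hx₀ u)) levels
  exact hL.trans (sum_half_pow_mul_edgeCount_le hA hαβ ha hκ hdisc hx hy _ (fun k l h => h.1)
    (fun k l h => h.2.1) fun k l h => h.2.2)

lemma sum_filter_dominated_le (hA : ∀ u v, 0 ≤ A u v) (hrow : ∀ u, ∑ v, A u v = r) {b : ℝ}
    (hb : 0 < b) (hr : 0 ≤ r) (hx₀ : ∀ u, 0 ≤ x u) (hx : ∑ u, x u ^ 2 ≤ 1) :
    ∑ u, ∑ v with y v * b ≤ x u, x u * y v * A u v ≤ r / b := by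
  have pointwise (u : α) (v : β) (h : y v * b ≤ x u) :
      x u * y v * A u v ≤ x u ^ 2 / b * A u v := by
    refine mul_le_mul_of_nonneg_right ?_ (hA u v)
    rw [le_div_iff₀ hb, mul_assoc, sq]
    exact mul_le_mul_of_nonneg_left h (hx₀ u)
  calc ∑ u, ∑ v with y v * b ≤ x u, x u * y v * A u v
      ≤ ∑ u, ∑ v with y v * b ≤ x u, x u ^ 2 / b * A u v :=
        Finset.sum_le_sum fun u _ => Finset.sum_le_sum fun v hv =>
          pointwise u v (Finset.mem_filter.1 hv).2
    _ ≤ ∑ u, ∑ v, x u ^ 2 / b * A u v :=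
        Finset.sum_le_sum fun u _ => Finset.sum_le_sum_of_subset_of_nonneg
          (Finset.filter_subset _ _) fun v _ _ => mul_nonneg (by positivity) (hA u v)
    _ = (∑ u, x u ^ 2) * (r / b) := by
        simp only [← Finset.mul_sum, hrow, Finset.sum_mul]
        exact Finset.sum_congr rfl fun u _ => by ring
    _ ≤ r / b := mul_le_of_le_one_left (div_nonneg hr hb.le) hx

lemma sum_filter_le_add_add {f : α → β → ℝ} (hf : ∀ u v, 0 ≤ f u v) {p p₁ p₂ p₃ : α → β → Prop}
    (hp : ∀ u v, p u v → p₁ u v ∨ p₂ u v ∨ p₃ u v) :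
    ∑ u, ∑ v with p u v, f u v ≤
      ∑ u, ∑ v with p₁ u v, f u v + ∑ u, ∑ v with p₂ u v, f u v + ∑ u, ∑ v with p₃ u v, f u v := by
  simp only [← Finset.sum_add_distrib]
  refine Finset.sum_le_sum fun u _ => ?_
  simp only [Finset.sum_filter, ← Finset.sum_add_distrib]
  refine Finset.sum_le_sum fun v _ => ?_
  have h₀ := hf u v
  by_cases h : p u v
  · rcases hp u v h with h' | h' | h' <;> simp only [h, h', if_true] <;> split_ifs <;> linarith
  · rw [if_neg h]
    split_ifs <;> linarith

/-- The constant of the heavy part of the form `xᵀ A y`, in units of the square root of the row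
sums: one from each of the two unbalanced regions, the rest from the balanced one. -/
def heavyConst (κ : ℝ) : ℝ :=
  2 * (288 + 128 * κ) + 1 + 1

lemma sum_heavy_le_of_sq [Nonempty α] (hA : IsBiregular A ((Fintype.card β * a) ^ 2) c)
    (hA₀ : ∀ u v, 0 ≤ A u v) (ha : 0 < a) (hαβ : Fintype.card α ≤ Fintype.card β) (hκ : 0 ≤ κ)
    (hdisc : HasDiscrepancy A (Fintype.card β * a * a) κ) (hx₀ : ∀ u, 0 ≤ x u)
    (hy₀ : ∀ v, 0 ≤ y v) (hx : ∑ u, x u ^ 2 ≤ 1) (hy : ∑ v, y v ^ 2 ≤ 1) :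
    ∑ u, ∑ v with a < x u * y v, x u * y v * A u v ≤ heavyConst κ * (Fintype.card β * a) := by
  have hα : (0 : ℝ) < Fintype.card α := by exact_mod_cast Fintype.card_pos
  have hβ : (0 : ℝ) < Fintype.card β := hα.trans_le (by exact_mod_cast hαβ)
  have hβa : 0 < Fintype.card β * a := mul_pos hβ ha
  have hαa : 0 < Fintype.card α * a := mul_pos hα ha
  have hc : c = Fintype.card α * a * (Fintype.card β * a) :=
    mul_left_cancel₀ hβ.ne' (by linarith [hA.card_mul_eq_card_mul])
  have hc₀ : 0 ≤ c := hc ▸ mul_nonneg hαa.le hβa.le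
  have row := sum_filter_dominated_le (y := y) hA₀ hA.sum_row hβa (sq_nonneg _) hx₀ hx
  have col := sum_filter_dominated_le (y := x) (fun v u => hA₀ u v) hA.sum_col hαa hc₀ hy₀ hy
  have balanced := sum_isBalanced_le hA₀ hαβ ha hκ hdisc hx₀ hx hy
  rw [sq, mul_div_cancel_right₀ _ hβa.ne'] at row
  rw [hc, mul_div_cancel_left₀ _ hαa.ne'] at col
  simp only [Finset.sum_filter] at col
  rw [Finset.sum_comm] at col
  simp only [← Finset.sum_filter, mul_comm (y _) (x _)] at col
  rw [Finset.sum_filter, Fintype.sum_prod_type] at balanced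
  simp only [← Finset.sum_filter] at balanced
  have regions (u : α) (v : β) (h : a < x u * y v) : IsBalanced a x y u v ∨
      y v * (Fintype.card β * a) ≤ x u ∨ x u * (Fintype.card α * a) ≤ y v := by
    by_cases h₁ : y v * (Fintype.card β * a) ≤ x u
    · exact .inr (.inl h₁)
    by_cases h₂ : x u * (Fintype.card α * a) ≤ y v
    · exact .inr (.inr h₂)
    exact .inl ⟨h, not_le.1 h₁, not_le.1 h₂⟩
  refine (sum_filter_le_add_add
    (fun u v => mul_nonneg (mul_nonneg (hx₀ u) (hy₀ v)) (hA₀ u v)) regions).trans ?_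
  unfold heavyConst
  linarith

lemma sum_heavy_le [Nonempty α] (hA : IsBiregular A r c) (hA₀ : ∀ u v, 0 ≤ A u v) (hr : 0 < r)
    (hαβ : Fintype.card α ≤ Fintype.card β) (hκ : 0 ≤ κ)
    (hdisc : HasDiscrepancy A (r / Fintype.card β) κ) (hx₀ : ∀ u, 0 ≤ x u) (hy₀ : ∀ v, 0 ≤ y v)
    (hx : ∑ u, x u ^ 2 ≤ 1) (hy : ∑ v, y v ^ 2 ≤ 1) :
    ∑ u, ∑ v with √r / Fintype.card β < x u * y v, x u * y v * A u v ≤ heavyConst κ * √r := by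
  have hβ : (0 : ℝ) < Fintype.card β := by exact_mod_cast Fintype.card_pos.trans_le hαβ
  have hβa : Fintype.card β * (√r / Fintype.card β) = √r := mul_div_cancel₀ _ hβ.ne'
  have hp : r / Fintype.card β = √r * (√r / Fintype.card β) := by
    rw [← mul_div_assoc, Real.mul_self_sqrt hr.le]
  have := sum_heavy_le_of_sq (a := √r / Fintype.card β) (by rwa [hβa, Real.sq_sqrt hr.le]) hA₀
    (div_pos (Real.sqrt_pos.2 hr) hβ) hαβ hκ (by rwa [hβa, ← hp]) hx₀ hy₀ hx hy
  rwa [hβa] at this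

end HeavyBound

section SmallForm

variable {α β : Type*} [Fintype α] [Fintype β] {A : Matrix α β ℝ} {r c κ : ℝ} {x : α → ℝ}
  {y : β → ℝ}

open Matrix

lemma frobeniusInner_vecMulVec_le_add (hA₀ : ∀ u v, 0 ≤ A u v) (a : ℝ) (x : α → ℝ) (y : β → ℝ) :
    frobeniusInner (vecMulVec x y) A ≤ frobeniusInner (lightPart a (vecMulVec x y)) A +
      ∑ u, ∑ v with a < |x u * y v|, |x u * y v| * A u v := by
  simp only [frobeniusInner, ← Finset.sum_add_distrib, Finset.sum_filter]
  refine Finset.sum_le_sum fun u _ => Finset.sum_le_sum fun v _ => ?_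
  have h₀ := mul_le_mul_of_nonneg_right (le_abs_self (x u * y v)) (hA₀ u v)
  unfold lightPart
  rw [of_apply, vecMulVec_apply]
  split_ifs <;> linarith

lemma frobeniusInner_vecMulVec_le [Nonempty α] (hA : IsBiregular A r c) (hA₀ : ∀ u v, 0 ≤ A u v)
    (hr : 0 < r) (hαβ : Fintype.card α ≤ Fintype.card β) (hκ : 0 ≤ κ)
    (hdisc : HasDiscrepancy A (r / Fintype.card β) κ) (hx : ∑ u, x u ^ 2 ≤ 1)
    (hy : ∑ v, y v ^ 2 ≤ 1)
    (hlight : frobeniusInner (lightPart (√r / Fintype.card β) (vecMulVec x y)) A ≤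
      lightConst * √r) :
    frobeniusInner (vecMulVec x y) A ≤ (lightConst + heavyConst κ) * √r := by
  have heavy := sum_heavy_le (x := fun u => |x u|) (y := fun v => |y v|) hA hA₀ hr hαβ hκ hdisc
    (fun u => abs_nonneg _) (fun v => abs_nonneg _) (by simpa only [sq_abs] using hx)
    (by simpa only [sq_abs] using hy)
  simp only [← abs_mul] at heavy
  rw [add_mul]
  exact (frobeniusInner_vecMulVec_le_add hA₀ _ x y).trans (add_le_add hlight heavy)

end SmallForm

/-! ### Nets -/

section Net

open Metric Module
open scoped NNReal ENNReal

variable {E F : Type*} [NormedAddCommGroup E] [NormedSpace ℝ E] [NormedAddCommGroup F]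
  [NormedSpace ℝ F]

lemma card_le_of_isSeparated_half [FiniteDimensional ℝ E] {s : Finset E}
    (hs : (s : Set E) ⊆ closedBall 0 1) (hsep : IsSeparated (1 / 2 : ℝ≥0) (s : Set E)) :
    s.card ≤ 5 ^ finrank ℝ E := by
  have hinj : Function.Injective fun c : E => (2 : ℝ) • c := smul_right_injective E two_ne_zero
  rw [← Finset.card_image_of_injective s hinj]
  refine Besicovitch.card_le_of_separated _ ?_ ?_ <;> simp only [Finset.forall_mem_image]
  · intro c hc
    have := mem_closedBall_zero_iff.1 (hs hc)
    rw [norm_smul, Real.norm_two]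
    linarith
  · intro c hc d hd hcd
    have : ((1 / 2 : ℝ≥0) : ℝ≥0∞) < edist c d := hsep hc hd fun h => hcd (h ▸ rfl)
    rw [edist_nndist, ENNReal.coe_lt_coe, ← NNReal.coe_lt_coe, coe_nndist, dist_eq_norm] at this
    rw [← smul_sub, norm_smul, Real.norm_two]
    norm_num at this
    linarith

lemma packingNumber_half_closedBall_le (E : Type*) [NormedAddCommGroup E] [NormedSpace ℝ E]
    [FiniteDimensional ℝ E] :
    packingNumber (1 / 2) (closedBall (0 : E) 1) ≤ (5 ^ finrank ℝ E : ℕ) := by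
  refine iSup_le fun C => iSup₂_le fun hC hsep => ?_
  by_contra! h
  obtain ⟨t, htC, ht⟩ := Set.exists_subset_encard_eq (Order.add_one_le_of_lt h)
  have hfin : t.Finite := Set.finite_of_encard_eq_coe (k := 5 ^ finrank ℝ E + 1) (by simpa using ht)
  lift t to Finset E using hfin
  have hcard := card_le_of_isSeparated_half (htC.trans hC) (hsep.subset htC)
  rw [Set.encard_coe_eq_coe_finsetCard] at ht
  norm_cast at ht
  omega

lemma exists_isCover_half_closedBall (E : Type*) [NormedAddCommGroup E] [NormedSpace ℝ E]
    [FiniteDimensional ℝ E] :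
    ∃ N : Finset E, N.card ≤ 5 ^ finrank ℝ E ∧ (N : Set E) ⊆ closedBall 0 1 ∧
      IsCover (1 / 2) (closedBall 0 1) (N : Set E) := by
  have hpack := packingNumber_half_closedBall_le E
  have htop : packingNumber (1 / 2) (closedBall (0 : E) 1) ≠ ⊤ :=
    ne_top_of_le_ne_top (by simp) hpack
  rw [← encard_maximalSeparatedSet htop] at hpack
  obtain ⟨N, hN⟩ := (Set.finite_of_encard_le_coe hpack).exists_finset_coe
  rw [← hN, Set.encard_coe_eq_coe_finsetCard] at hpack
  refine ⟨N, by exact_mod_cast hpack, ?_, ?_⟩ <;> rw [hN]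
  exacts [maximalSeparatedSet_subset, isCover_maximalSeparatedSet htop]

lemma exists_norm_sub_le_half {E : Type*} [NormedAddCommGroup E] {N : Set E}
    (hN : IsCover (1 / 2) (closedBall 0 1) N) {x : E} (hx : ‖x‖ ≤ 1) :
    ∃ c ∈ N, ‖x - c‖ ≤ 1 / 2 := by
  obtain ⟨c, hc, hxc⟩ := hN (mem_closedBall_zero_iff.2 hx)
  refine ⟨c, hc, ?_⟩
  rw [← dist_eq_norm]
  exact_mod_cast edist_le_coe.1 hxc

variable {N : Set E} {τ : ℝ}

lemma opNorm_le_two_mul_of_isCover (hN : IsCover (1 / 2) (closedBall 0 1) N) {f : E →L[ℝ] F}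
    (hf : ∀ c ∈ N, ‖f c‖ ≤ τ) : ‖f‖ ≤ 2 * τ := by
  have unit (x : E) (hx : ‖x‖ ≤ 1) : ‖f x‖ ≤ τ + ‖f‖ / 2 := by
    obtain ⟨c, hc, hxc⟩ := exists_norm_sub_le_half hN hx
    calc ‖f x‖ = ‖f c + f (x - c)‖ := by rw [← map_add, add_sub_cancel]
      _ ≤ ‖f c‖ + ‖f (x - c)‖ := norm_add_le _ _
      _ ≤ τ + ‖f‖ / 2 := add_le_add (hf c hc) (by linarith [f.le_of_opNorm_le_of_le le_rfl hxc])
  have hτ : 0 ≤ τ + ‖f‖ / 2 := by simpa using unit 0 (by simp)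
  linarith [ContinuousLinearMap.opNorm_le_of_unit_norm hτ fun x hx => unit x hx.le]

lemma opNorm_le_two_mul_of_isCover_real (hN : IsCover (1 / 2) (closedBall 0 1) N) {f : E →L[ℝ] ℝ}
    (hf : ∀ c ∈ N, f c ≤ τ) : ‖f‖ ≤ 2 * τ := by
  have unit (x : E) (hx : ‖x‖ ≤ 1) : f x ≤ τ + ‖f‖ / 2 := by
    obtain ⟨c, hc, hxc⟩ := exists_norm_sub_le_half hN hx
    calc f x = f c + f (x - c) := by rw [← map_add, add_sub_cancel]
      _ ≤ τ + ‖f‖ / 2 := add_le_add (hf c hc)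
        ((Real.le_norm_self _).trans (by linarith [f.le_of_opNorm_le_of_le le_rfl hxc]))
  have hτ : 0 ≤ τ + ‖f‖ / 2 := by simpa using unit 0 (by simp)
  have abs_unit (x : E) (hx : ‖x‖ = 1) : ‖f x‖ ≤ τ + ‖f‖ / 2 :=
    abs_le'.2 ⟨unit x hx.le, by simpa using unit (-x) (by simpa using hx.le)⟩
  linarith [ContinuousLinearMap.opNorm_le_of_unit_norm hτ abs_unit]

lemma opNorm_le_four_mul_of_isCover {M : Set F} (hN : IsCover (1 / 2) (closedBall 0 1) N)
    (hM : IsCover (1 / 2) (closedBall 0 1) M) {B : E →L[ℝ] F →L[ℝ] ℝ}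
    (hB : ∀ c ∈ N, ∀ d ∈ M, B c d ≤ τ) : ‖B‖ ≤ 4 * τ := by
  have := opNorm_le_two_mul_of_isCover hN fun c hc => opNorm_le_two_mul_of_isCover_real hM (hB c hc)
  linarith

end Net

section MatrixNet

open Metric Module Matrix

variable {α β : Type*} [Fintype α] [Fintype β] {A : Matrix α β ℝ} {τ : ℝ}

lemma toLinearMap₂'_apply_eq_frobeniusInner (A : Matrix α β ℝ) (x : α → ℝ) (y : β → ℝ) :
    toLinearMap₂' ℝ A x y = frobeniusInner (vecMulVec x y) A := by
  simp only [toLinearMap₂'_apply, frobeniusInner, vecMulVec_apply, smul_eq_mul, mul_assoc]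

lemma frobeniusInner_vecMulVec_le_of_isCover {S : Submodule ℝ (EuclideanSpace ℝ α)} {N : Set S}
    {M : Set (EuclideanSpace ℝ β)} (hN : IsCover (1 / 2) (closedBall 0 1) N)
    (hM : IsCover (1 / 2) (closedBall 0 1) M)
    (hA : ∀ c ∈ N, ∀ d ∈ M, frobeniusInner (vecMulVec c.1.ofLp d.ofLp) A ≤ τ) (x : S)
    (y : EuclideanSpace ℝ β) :
    2 * frobeniusInner (vecMulVec x.1.ofLp y.ofLp) A ≤ 4 * τ * (‖x‖ ^ 2 + ‖y‖ ^ 2) := by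
  set B := ((toLinearMap₂' ℝ A).compl₁₂ ((WithLp.linearEquiv 2 ℝ (α → ℝ)).toLinearMap ∘ₗ S.subtype)
    (WithLp.linearEquiv 2 ℝ (β → ℝ)).toLinearMap).toContinuousBilinearMap
  have apply_eq (x : S) (y : EuclideanSpace ℝ β) :
      B x y = frobeniusInner (vecMulVec x.1.ofLp y.ofLp) A :=
    toLinearMap₂'_apply_eq_frobeniusInner A _ _
  have norm_le : ‖B‖ ≤ 4 * τ :=
    opNorm_le_four_mul_of_isCover hN hM fun c hc d hd => (apply_eq c d).trans_le (hA c hc d hd)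
  calc 2 * frobeniusInner (vecMulVec x.1.ofLp y.ofLp) A = 2 * B x y := by rw [apply_eq]
    _ ≤ 2 * (‖B‖ * ‖x‖ * ‖y‖) :=
        mul_le_mul_of_nonneg_left ((Real.le_norm_self _).trans (B.le_opNorm₂ x y)) zero_le_two
    _ = ‖B‖ * (2 * ‖x‖ * ‖y‖) := by ring
    _ ≤ ‖B‖ * (‖x‖ ^ 2 + ‖y‖ ^ 2) :=
        mul_le_mul_of_nonneg_left (two_mul_le_add_sq _ _) (norm_nonneg B)
    _ ≤ 4 * τ * (‖x‖ ^ 2 + ‖y‖ ^ 2) := mul_le_mul_of_nonneg_right norm_le (by positivity)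

/-- The quadratic form `2 xᵀ A y` is at most `B (|x|² + |y|²)` whenever the entries of `x` and of
`y` sum to zero. -/
def CentredFormLE (A : Matrix α β ℝ) (B : ℝ) : Prop :=
  ∀ (x : α → ℝ) (y : β → ℝ), ∑ u, x u = 0 → ∑ v, y v = 0 →
    2 * frobeniusInner (vecMulVec x y) A ≤ B * (∑ u, x u ^ 2 + ∑ v, y v ^ 2)

/-- The subspace of vectors whose coordinates sum to zero. -/
def centred (α : Type*) [Fintype α] : Submodule ℝ (EuclideanSpace ℝ α) :=
  (LinearMap.lsum ℝ (fun _ : α => ℝ) ℝ fun _ => LinearMap.id).comp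
    (WithLp.linearEquiv 2 ℝ (α → ℝ)).toLinearMap |>.ker

lemma mem_centred {x : EuclideanSpace ℝ α} : x ∈ centred α ↔ ∑ u, x u = 0 := by
  simp [centred]

lemma sum_sq_le_one_of_mem_closedBall {x : EuclideanSpace ℝ α} (hx : x ∈ closedBall 0 1) :
    ∑ u, x u ^ 2 ≤ 1 := by
  rw [← EuclideanSpace.real_norm_sq_eq]
  exact pow_le_one₀ (norm_nonneg _) (mem_closedBall_zero_iff.1 hx)

/-- A finite family of pairs of test vectors, exponential in the dimensions, that controls the form
`xᵀ A y` on centred `x` up to a factor `4`. -/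
structure IsCentredNet (N : Finset (α → ℝ)) (M : Finset (β → ℝ)) : Prop where
  card_left_le : N.card ≤ 5 ^ Fintype.card α
  card_right_le : M.card ≤ 5 ^ Fintype.card β
  sum_left : ∀ c ∈ N, ∑ u, c u = 0
  sum_sq_left_le : ∀ c ∈ N, ∑ u, c u ^ 2 ≤ 1
  sum_sq_right_le : ∀ d ∈ M, ∑ v, d v ^ 2 ≤ 1
  centredFormLE (A : Matrix α β ℝ) (τ : ℝ) :
    (∀ c ∈ N, ∀ d ∈ M, frobeniusInner (vecMulVec c d) A ≤ τ) → CentredFormLE A (4 * τ)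

lemma exists_isCentredNet (α β : Type*) [Fintype α] [Fintype β] :
    ∃ (N : Finset (α → ℝ)) (M : Finset (β → ℝ)), IsCentredNet N M := by
  obtain ⟨N, hN, hN₁, hN₂⟩ := exists_isCover_half_closedBall (centred α)
  obtain ⟨M, hM, hM₁, hM₂⟩ := exists_isCover_half_closedBall (EuclideanSpace ℝ β)
  have finrank_le : finrank ℝ (centred α) ≤ Fintype.card α :=
    (Submodule.finrank_le _).trans_eq finrank_euclideanSpace
  rw [finrank_euclideanSpace] at hM
  refine ⟨N.image fun c => c.1.ofLp, M.image fun d => d.ofLp, ?_⟩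
  exact {
    card_left_le := Finset.card_image_le.trans
      (hN.trans (Nat.pow_le_pow_right (by norm_num) finrank_le))
    card_right_le := Finset.card_image_le.trans hM
    sum_left := Finset.forall_mem_image.2 fun c _ => mem_centred.1 c.2
    sum_sq_left_le := Finset.forall_mem_image.2 fun c hc =>
      sum_sq_le_one_of_mem_closedBall (hN₁ hc)
    sum_sq_right_le := Finset.forall_mem_image.2 fun d hd =>
      sum_sq_le_one_of_mem_closedBall (hM₁ hd)
    centredFormLE A τ hA x y hx _ := by
      have key := frobeniusInner_vecMulVec_le_of_isCover hN₂ hM₂ (fun c hc d hd =>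
        hA _ (Finset.mem_image_of_mem _ hc) _ (Finset.mem_image_of_mem _ hd))
        ⟨WithLp.toLp 2 x, mem_centred.2 hx⟩ (WithLp.toLp 2 y)
      rwa [Submodule.coe_norm, EuclideanSpace.real_norm_sq_eq,
        EuclideanSpace.real_norm_sq_eq] at key }

end MatrixNet

/-! ### Spectral reduction -/

section Centring

open Matrix

variable {ι α β : Type*} [Fintype ι] [Fintype α] [Fintype β] {A : Matrix α β ℝ} {r c B : ℝ}

lemma exists_sum_eq_zero_eq_add_const [Nonempty ι] (x : ι → ℝ) :
    ∃ (x₀ : ι → ℝ) (s : ℝ), ∑ i, x₀ i = 0 ∧ x = fun i => x₀ i + s := by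
  refine ⟨fun i => x i - (∑ j, x j) / Fintype.card ι, (∑ j, x j) / Fintype.card ι, ?_, by simp⟩
  rw [Finset.sum_sub_distrib, Finset.sum_const, nsmul_eq_mul, Finset.card_univ,
    mul_div_cancel₀ _ (by simp), sub_self]

lemma sum_add_const {x₀ : ι → ℝ} (hx₀ : ∑ i, x₀ i = 0) (s : ℝ) :
    ∑ i, (x₀ i + s) = Fintype.card ι * s := by
  rw [Finset.sum_add_distrib, hx₀, zero_add, Finset.sum_const, nsmul_eq_mul, Finset.card_univ]

lemma sum_sq_le_sum_add_const_sq {x₀ : ι → ℝ} (hx₀ : ∑ i, x₀ i = 0) (s : ℝ) :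
    ∑ i, x₀ i ^ 2 ≤ ∑ i, (x₀ i + s) ^ 2 := by
  have expand : ∑ i, (x₀ i + s) ^ 2 = ∑ i, x₀ i ^ 2 + Fintype.card ι * s ^ 2 := by
    simp only [add_sq, Finset.sum_add_distrib, mul_assoc, ← Finset.mul_sum, ← Finset.sum_mul, hx₀]
    simp
  rw [expand]
  exact le_add_of_nonneg_right (by positivity)

lemma IsBiregular.frobeniusInner_vecMulVec_add_const (hA : IsBiregular A r c) {x₀ : α → ℝ}
    {y₀ : β → ℝ} (hx₀ : ∑ u, x₀ u = 0) (hy₀ : ∑ v, y₀ v = 0) (s t : ℝ) :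
    frobeniusInner (vecMulVec (fun u => x₀ u + s) (fun v => y₀ v + t)) A =
      frobeniusInner (vecMulVec x₀ y₀) A + s * t * (Fintype.card α * r) := by
  have row : ∑ u, ∑ v, x₀ u * t * A u v = 0 := by
    simp only [← Finset.mul_sum, hA.sum_row, ← Finset.sum_mul, hx₀, zero_mul]
  have col : ∑ u, ∑ v, s * y₀ v * A u v = 0 := by
    rw [Finset.sum_comm]
    simp only [← Finset.mul_sum, hA.sum_col, ← Finset.sum_mul, hy₀, zero_mul, mul_zero]
  have const : ∑ u, ∑ v, s * t * A u v = s * t * (Fintype.card α * r) := by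
    simp only [← Finset.mul_sum, hA.sum_sum]
  simp only [frobeniusInner, vecMulVec_apply, add_mul, mul_add, Finset.sum_add_distrib] at *
  rw [row, col, const]
  ring

lemma mul_nonpos_of_mul_add_mul_eq_zero {p q s t : ℝ} (hp : 0 < p) (hq : 0 ≤ q)
    (h : p * s + q * t = 0) : s * t ≤ 0 := by
  refine nonpos_of_mul_nonpos_right (a := p) ?_ hp
  rw [← mul_assoc, eq_neg_of_add_eq_zero_left h]
  nlinarith [mul_nonneg hq (sq_nonneg t)]

/-- Restoring the means `s` of `x` and `t` of `y` changes the form by a multiple of `s t`, and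
on the hyperplane the means have opposite signs. -/
lemma IsBiregular.two_mul_frobeniusInner_vecMulVec_le [Nonempty α] [Nonempty β]
    (hA : IsBiregular A r c) (hr : 0 < r) (hB : 0 ≤ B) (h : CentredFormLE A B) {x : α → ℝ}
    {y : β → ℝ} (hxy : √r * ∑ u, x u + √c * ∑ v, y v = 0) :
    2 * frobeniusInner (vecMulVec x y) A ≤ B * (∑ u, x u ^ 2 + ∑ v, y v ^ 2) := by
  obtain ⟨x₀, s, hx₀, rfl⟩ := exists_sum_eq_zero_eq_add_const x
  obtain ⟨y₀, t, hy₀, rfl⟩ := exists_sum_eq_zero_eq_add_const y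
  rw [sum_add_const hx₀, sum_add_const hy₀, ← mul_assoc, ← mul_assoc] at hxy
  have hst : s * t ≤ 0 := mul_nonpos_of_mul_add_mul_eq_zero
    (mul_pos (Real.sqrt_pos.2 hr) (by exact_mod_cast Fintype.card_pos)) (by positivity) hxy
  calc 2 * frobeniusInner (vecMulVec (fun u => x₀ u + s) (fun v => y₀ v + t)) A
      ≤ 2 * frobeniusInner (vecMulVec x₀ y₀) A := by
        rw [hA.frobeniusInner_vecMulVec_add_const hx₀ hy₀]
        linarith [mul_nonpos_of_nonpos_of_nonneg hst (by positivity : 0 ≤ Fintype.card α * r)]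
    _ ≤ B * (∑ u, x₀ u ^ 2 + ∑ v, y₀ v ^ 2) := h x₀ y₀ hx₀ hy₀
    _ ≤ _ := mul_le_mul_of_nonneg_left (add_le_add (sum_sq_le_sum_add_const_sq hx₀ s)
        (sum_sq_le_sum_add_const_sq hy₀ t)) hB

lemma IsBiregular.centredFormLE_sqrt (hA : IsBiregular A r 1) (hA₀ : ∀ u v, 0 ≤ A u v)
    (hr : 0 < r) : CentredFormLE A √r := by
  intro x y _ _
  have hD : 0 < √r := Real.sqrt_pos.2 hr
  have pointwise (u : α) (v : β) :
      2 * (x u * y v * A u v) ≤ x u ^ 2 / √r * A u v + √r * y v ^ 2 * A u v := by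
    have complete_sq : x u ^ 2 / √r + √r * y v ^ 2 - 2 * (x u * y v) =
        (x u - √r * y v) ^ 2 / √r := by
      field_simp
      ring
    have := mul_nonneg (div_nonneg (sq_nonneg (x u - √r * y v)) hD.le) (hA₀ u v)
    rw [← complete_sq] at this
    linarith
  have row : ∑ u, ∑ v, x u ^ 2 / √r * A u v = √r * ∑ u, x u ^ 2 := by
    simp only [← Finset.mul_sum, hA.sum_row, ← Finset.sum_mul, ← Finset.sum_div]
    rw [div_mul_eq_mul_div, mul_div_assoc, Real.div_sqrt, mul_comm]
  have col : ∑ u, ∑ v, √r * y v ^ 2 * A u v = √r * ∑ v, y v ^ 2 := by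
    rw [Finset.sum_comm]
    simp only [← Finset.mul_sum, hA.sum_col, mul_one]
  calc 2 * frobeniusInner (vecMulVec x y) A
      = ∑ u, ∑ v, 2 * (x u * y v * A u v) := by
        simp only [frobeniusInner, vecMulVec_apply, Finset.mul_sum]
    _ ≤ ∑ u, ∑ v, (x u ^ 2 / √r * A u v + √r * y v ^ 2 * A u v) :=
        Finset.sum_le_sum fun u _ => Finset.sum_le_sum fun v _ => pointwise u v
    _ = √r * (∑ u, x u ^ 2 + ∑ v, y v ^ 2) := by
        simp only [Finset.sum_add_distrib, row, col, mul_add]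

end Centring

section SecondEigenvalue

open Matrix

variable {ι : Type*} [Fintype ι] {A : Matrix ι ι ℝ} {B : ℝ}

lemma eigenvectorBasis_dotProduct (hA : A.IsHermitian) (i j : ι) :
    (hA.eigenvectorBasis i).ofLp ⬝ᵥ (hA.eigenvectorBasis j).ofLp = if i = j then 1 else 0 := by
  rw [← orthonormal_iff_ite.1 hA.eigenvectorBasis.orthonormal i j,
    EuclideanSpace.inner_eq_star_dotProduct, star_trivial, dotProduct_comm]

lemma exists_mul_add_mul_eq_zero (ℓ₁ ℓ₂ : ℝ) :
    ∃ a b : ℝ, a * ℓ₁ + b * ℓ₂ = 0 ∧ 0 < a ^ 2 + b ^ 2 := by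
  by_cases h : ℓ₁ = 0
  · exact ⟨1, 0, by rw [h]; ring, by norm_num⟩
  · exact ⟨-ℓ₂, ℓ₁, by ring, by positivity⟩

lemma eigenvalues_le_of_forall_ker (hA : A.IsHermitian) (ℓ : (ι → ℝ) →ₗ[ℝ] ℝ)
    (h : ∀ z, ℓ z = 0 → z ⬝ᵥ (A *ᵥ z) ≤ B * (z ⬝ᵥ z)) {i j : ι} (hij : i ≠ j)
    (hle : hA.eigenvalues j ≤ hA.eigenvalues i) : hA.eigenvalues j ≤ B := by
  set f : ι → ι → ℝ := fun k => (hA.eigenvectorBasis k).ofLp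
  have orth (k l : ι) : f k ⬝ᵥ f l = if k = l then 1 else 0 := eigenvectorBasis_dotProduct hA k l
  have eigen (k : ι) : A *ᵥ f k = hA.eigenvalues k • f k := hA.mulVec_eigenvectorBasis k
  obtain ⟨a, b, hab, hpos⟩ := exists_mul_add_mul_eq_zero (ℓ (f i)) (ℓ (f j))
  have form_le := h (a • f i + b • f j) (by simpa using hab)
  have form_eq : (a • f i + b • f j) ⬝ᵥ (A *ᵥ (a • f i + b • f j)) =
      a ^ 2 * hA.eigenvalues i + b ^ 2 * hA.eigenvalues j := by
    simp only [mulVec_add, mulVec_smul, eigen, add_dotProduct, dotProduct_add, smul_dotProduct,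
      dotProduct_smul, orth, hij, hij.symm, if_true, if_false, smul_eq_mul]
    ring
  have norm_eq : (a • f i + b • f j) ⬝ᵥ (a • f i + b • f j) = a ^ 2 + b ^ 2 := by
    simp only [add_dotProduct, dotProduct_add, smul_dotProduct, dotProduct_smul, orth, hij,
      hij.symm, if_true, if_false, smul_eq_mul]
    ring
  rw [form_eq, norm_eq] at form_le
  refine le_of_mul_le_mul_right ?_ hpos
  linarith [mul_le_mul_of_nonneg_left hle (sq_nonneg a)]

lemma dotProduct_fromBlocks_mulVec {α β : Type*} [Fintype α] [Fintype β] (M : Matrix α β ℝ)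
    (z : α ⊕ β → ℝ) :
    z ⬝ᵥ (fromBlocks 0 M Mᵀ 0 *ᵥ z) =
      2 * frobeniusInner (vecMulVec (z ∘ Sum.inl) (z ∘ Sum.inr)) M := by
  rw [fromBlocks_mulVec, zero_mulVec, zero_mulVec, zero_add, add_zero,
    ← toLinearMap₂'_apply_eq_frobeniusInner, toLinearMap₂'_apply', two_mul]
  nth_rw 1 [← Sum.elim_comp_inl_inr z]
  rw [sumElim_dotProduct_sumElim, mulVec_transpose, dotProduct_comm (z ∘ Sum.inr),
    ← dotProduct_mulVec]

/-- The second largest eigenvalue of the adjacency matrix `adj X` is at most `B`, for every way of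
listing the eigenvalues in decreasing order. -/
def SecondEigenvalueLE {n m : ℕ} (X : Fin n → Fin m → Bool) (B : ℝ) : Prop :=
  ∀ (hA : (adj X).IsHermitian) (σ : Fin (n + m) ≃ (Fin n ⊕ Fin m)),
    Antitone (fun i => hA.eigenvalues (σ i)) →
    ∀ i : Fin (n + m), (i : ℕ) = 1 → hA.eigenvalues (σ i) ≤ B

lemma SecondEigenvalueLE.mono {n m : ℕ} {X : Fin n → Fin m → Bool} {B' : ℝ}
    (h : SecondEigenvalueLE X B) (hB : B ≤ B') : SecondEigenvalueLE X B' :=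
  fun hA σ hσ i hi => (h hA σ hσ i hi).trans hB

lemma secondEigenvalueLE_of_centredFormLE {n m d₁ d₂ : ℕ} {X : Fin n → Fin m → Bool} (hn : 0 < n)
    (hm : 0 < m) (hd₁ : 0 < d₁) (hX : X ∈ BBG n m d₁ d₂) (hB : 0 ≤ B)
    (h : CentredFormLE (biadj X) B) : SecondEigenvalueLE X B := by
  have : NeZero n := ⟨hn.ne'⟩
  have : NeZero m := ⟨hm.ne'⟩
  intro hA σ hσ i hi
  let ℓ : (Fin n ⊕ Fin m → ℝ) →ₗ[ℝ] ℝ :=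
    √d₁ • ∑ u, LinearMap.proj (Sum.inl u) + √d₂ • ∑ v, LinearMap.proj (Sum.inr v)
  refine eigenvalues_le_of_forall_ker hA ℓ (fun z hz => ?_) (i := σ ⟨0, by omega⟩) ?_ ?_
  · have key := (mem_BBG_iff.1 hX).two_mul_frobeniusInner_vecMulVec_le (x := z ∘ Sum.inl)
      (y := z ∘ Sum.inr) (by exact_mod_cast hd₁) hB h (by simpa [ℓ] using hz)
    rw [← dotProduct_fromBlocks_mulVec] at key
    simpa only [adj, dotProduct, Fintype.sum_sum_type, sq, Function.comp_apply] using key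
  · exact σ.injective.ne (Fin.ne_of_val_ne (by simp [hi]))
  · exact hσ (Fin.mk_le_of_le_val (Nat.zero_le _))

end SecondEigenvalue

/-! ### The union bound -/

section UnionBound

open Matrix

/-- The constant `α` in `λ₂ ≤ α √d₁`: the factor `4` comes from the net, and `16 (K + 4)` is the
discrepancy constant that fails with probability at most `m ^ (-K)`. -/
def eigenvalueConst (K : ℝ) : ℝ :=
  4 * (lightConst + heavyConst (16 * (K + 4)))

lemma one_le_eigenvalueConst {K : ℝ} (hK : 0 ≤ K) : 1 ≤ eigenvalueConst K := by
  have := Real.exp_pos 4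
  unfold eigenvalueConst lightConst heavyConst
  linarith

lemma eight_mul_cube_le_sq {n d : ℕ} (h : (d : ℝ) ≤ (1 / 2) * (n : ℝ) ^ ((2 : ℝ) / 3)) :
    8 * d ^ 3 ≤ n ^ 2 := by
  have rpow_cube : ((n : ℝ) ^ ((2 : ℝ) / 3)) ^ 3 = (n : ℝ) ^ 2 := by
    rw [← Real.rpow_mul_natCast (Nat.cast_nonneg n)]
    norm_num
  have key : (d : ℝ) ^ 3 ≤ ((1 / 2) * (n : ℝ) ^ ((2 : ℝ) / 3)) ^ 3 := by gcongr
  rw [mul_pow, rpow_cube] at key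
  have : (8 : ℝ) * (d : ℝ) ^ 3 ≤ (n : ℝ) ^ 2 := by linarith
  exact_mod_cast this

lemma four_mul_le_of_eight_mul_cube_le_sq {n d : ℕ} (hd : 2 ≤ d) (h : 8 * d ^ 3 ≤ n ^ 2) :
    4 * d ≤ n := by
  refine (Nat.pow_le_pow_iff_left two_ne_zero).1 ?_
  calc (4 * d) ^ 2 = 8 * (2 * d ^ 2) := by ring
    _ ≤ 8 * (d * d ^ 2) := by gcongr
    _ = 8 * d ^ 3 := by ring
    _ ≤ n ^ 2 := h

lemma twentyFive_pow_le_exp (m : ℕ) : (25 : ℝ) ^ m ≤ Real.exp (4 * m) := by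
  rw [mul_comm, Real.exp_nat_mul]
  gcongr
  calc (25 : ℝ) ≤ 2.7 ^ 4 := by norm_num
    _ ≤ Real.exp 1 ^ 4 := by
        gcongr
        linarith [Real.exp_one_gt_d9]
    _ = Real.exp 4 := by
        rw [← Real.exp_nat_mul]
        norm_num

namespace IsCentredNet

section Deterministic

variable {α β : Type*} [Fintype α] [Fintype β] {N : Finset (α → ℝ)} {M : Finset (β → ℝ)}

lemma card_mul_card_le (hNM : IsCentredNet N M) (hαβ : Fintype.card α ≤ Fintype.card β) :
    ((N.card * M.card : ℕ) : ℝ) ≤ Real.exp (4 * Fintype.card β) := by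
  have : N.card * M.card ≤ 25 ^ Fintype.card β := by
    calc N.card * M.card ≤ 5 ^ Fintype.card α * 5 ^ Fintype.card β :=
          Nat.mul_le_mul hNM.card_left_le hNM.card_right_le
      _ ≤ 5 ^ Fintype.card β * 5 ^ Fintype.card β := by gcongr; norm_num
      _ = (5 * 5) ^ Fintype.card β := (mul_pow ..).symm
  exact le_trans (by exact_mod_cast this) (twentyFive_pow_le_exp _)

lemma sum_vecMulVec_eq_zero (hNM : IsCentredNet N M) {x : α → ℝ} (hx : x ∈ N) (y : β → ℝ) :
    ∑ u, ∑ v, vecMulVec x y u v = 0 := by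
  simp only [vecMulVec_apply, ← Finset.mul_sum, ← Finset.sum_mul, hNM.sum_left x hx, zero_mul]

lemma sum_sq_vecMulVec_le (hNM : IsCentredNet N M) {x : α → ℝ} (hx : x ∈ N) {y : β → ℝ}
    (hy : y ∈ M) : ∑ u, ∑ v, vecMulVec x y u v ^ 2 ≤ 1 := by
  simp only [vecMulVec_apply, mul_pow, ← Finset.mul_sum, ← Finset.sum_mul]
  exact mul_le_one₀ (hNM.sum_sq_left_le x hx) (by positivity) (hNM.sum_sq_right_le y hy)

lemma centredFormLE_of_light [Nonempty α] {A : Matrix α β ℝ} {r c κ : ℝ}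
    (hNM : IsCentredNet N M) (hA : IsBiregular A r c) (hA₀ : ∀ u v, 0 ≤ A u v) (hr : 0 < r)
    (hαβ : Fintype.card α ≤ Fintype.card β) (hκ : 0 ≤ κ)
    (hdisc : HasDiscrepancy A (r / Fintype.card β) κ)
    (hlight : ∀ x ∈ N, ∀ y ∈ M,
      frobeniusInner (lightPart (√r / Fintype.card β) (vecMulVec x y)) A ≤ lightConst * √r) :
    CentredFormLE A (4 * (lightConst + heavyConst κ) * √r) := by
  rw [mul_assoc]
  exact hNM.centredFormLE A _ fun x hx y hy => frobeniusInner_vecMulVec_le hA hA₀ hr hαβ hκ hdisc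
    (hNM.sum_sq_left_le x hx) (hNM.sum_sq_right_le y hy) (hlight x hx y hy)

end Deterministic

variable {n m d₁ d₂ : ℕ}

lemma card_exists_light_le {N : Finset (Fin n → ℝ)} {M : Finset (Fin m → ℝ)}
    (hNM : IsCentredNet N M) (hd₁ : 0 < d₁) (hd₂ : 0 < d₂) (hnd : n * d₁ = m * d₂) (hnm : n ≤ m)
    (hd₂n : 4 * d₂ ≤ n) (hcube : d₂ ^ 3 ≤ n ^ 2) :
    (((BBG n m d₁ d₂).filter fun X => ∃ p ∈ N ×ˢ M, lightConst * √d₁ ≤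
      frobeniusInner (lightPart (√d₁ / m) (vecMulVec p.1 p.2)) (biadj X)).card : ℝ) ≤
      Real.exp (-m) * (BBG n m d₁ d₂).card := by
  set light : (Fin n → ℝ) × (Fin m → ℝ) → Finset (Fin n → Fin m → Bool) := fun p =>
    (BBG n m d₁ d₂).filter fun X => lightConst * √d₁ ≤
      frobeniusInner (lightPart (√d₁ / m) (vecMulVec p.1 p.2)) (biadj X)
  have tail : ∀ p ∈ N ×ˢ M,
      ((light p).card : ℝ) ≤ Real.exp (-5 * m) * (BBG n m d₁ d₂).card := fun p hp => by
    obtain ⟨hx, hy⟩ := Finset.mem_product.1 hp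
    exact card_lightPart_tail_le hd₁ hd₂ hnd hd₂n hcube (hNM.sum_vecMulVec_eq_zero hx _)
      (hNM.sum_sq_vecMulVec_le hx hy)
  have card_le : ((N.card * M.card : ℕ) : ℝ) ≤ Real.exp (4 * m) := by
    simpa only [Fintype.card_fin] using hNM.card_mul_card_le (by simpa using hnm)
  calc _ ≤ (((N ×ˢ M).biUnion light).card : ℝ) := by
        refine Nat.cast_le.2 (Finset.card_le_card fun X hX => ?_)
        obtain ⟨hX, p, hp, h⟩ := Finset.mem_filter.1 hX
        exact Finset.mem_biUnion.2 ⟨p, hp, Finset.mem_filter.2 ⟨hX, h⟩⟩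
    _ ≤ ∑ p ∈ N ×ˢ M, ((light p).card : ℝ) := by exact_mod_cast Finset.card_biUnion_le
    _ ≤ (N.card * M.card : ℕ) * (Real.exp (-5 * m) * (BBG n m d₁ d₂).card) := by
        rw [← Finset.card_product, ← nsmul_eq_mul]
        exact Finset.sum_le_card_nsmul _ _ _ tail
    _ ≤ Real.exp (4 * m) * (Real.exp (-5 * m) * (BBG n m d₁ d₂).card) := by gcongr
    _ = Real.exp (-m) * (BBG n m d₁ d₂).card := by
        rw [← mul_assoc, ← Real.exp_add]
        ring_nf

end IsCentredNet

variable {n m d₁ d₂ : ℕ} {K : ℝ}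

lemma card_not_secondEigenvalueLE_le_of_two_le (hn : 0 < n) (hnm : n ≤ m) (hd₁ : 0 < d₁)
    (hd₂ : 2 ≤ d₂) (hnd : n * d₁ = m * d₂) (hcube : 8 * d₂ ^ 3 ≤ n ^ 2) (hK : 0 ≤ K) :
    (((BBG n m d₁ d₂).filter fun X =>
      ¬ SecondEigenvalueLE X (eigenvalueConst K * √d₁)).card : ℝ) ≤
      ((m : ℝ) ^ (-K) + Real.exp (-m)) * (BBG n m d₁ d₂).card := by
  have : NeZero n := ⟨hn.ne'⟩
  have hm : 0 < m := hn.trans_le hnm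
  have hd₂n : 4 * d₂ ≤ n := four_mul_le_of_eight_mul_cube_le_sq hd₂ hcube
  have density : (d₂ : ℝ) / n = d₁ / m := by
    rw [div_eq_div_iff (by positivity) (by positivity)]
    exact_mod_cast (by linarith : d₂ * m = d₁ * n)
  obtain ⟨N, M, hNM⟩ := exists_isCentredNet (Fin n) (Fin m)
  have disc := card_not_hasDiscrepancy_le (d₁ := d₁) hd₁ (by omega : 0 < d₂) hnm hd₂n hK
  have light := hNM.card_exists_light_le hd₁ (by omega : 0 < d₂) hnd hnm hd₂n (by omega)
  rw [add_mul]
  refine le_trans ?_ (add_le_add disc light)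
  norm_cast
  refine (Finset.card_le_card fun X hX => ?_).trans (Finset.card_union_le _ _)
  rw [Finset.mem_union, Finset.mem_filter, Finset.mem_filter]
  obtain ⟨hX, hbad⟩ := Finset.mem_filter.1 hX
  by_contra! h
  refine hbad (secondEigenvalueLE_of_centredFormLE hn hm hd₁ hX
    (mul_nonneg (zero_le_one.trans (one_le_eigenvalueConst hK)) (Real.sqrt_nonneg _)) ?_)
  refine hNM.centredFormLE_of_light (mem_BBG_iff.1 hX) (biadj_nonneg X) (by exact_mod_cast hd₁)
    (by simpa using hnm) (by positivity) ?_ fun x hx y hy => ?_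
  · simpa only [Fintype.card_fin, density] using h.1 hX
  · simpa only [Fintype.card_fin] using (h.2 hX (x, y) (Finset.mk_mem_product hx hy)).le

/-- For `d₂ = 1` the graph is a disjoint union of stars; otherwise `4 * d₂ ≤ n`. -/
lemma card_not_secondEigenvalueLE_le (hn : 0 < n) (hm : 0 < m) (hd₁ : 0 < d₁) (hd₂ : 0 < d₂)
    (hnd : n * d₁ = m * d₂) (hdd : d₂ ≤ d₁) (hcube : 8 * d₂ ^ 3 ≤ n ^ 2) (hK : 0 ≤ K) :
    (((BBG n m d₁ d₂).filter fun X =>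
      ¬ SecondEigenvalueLE X (eigenvalueConst K * √d₁)).card : ℝ) ≤
      ((m : ℝ) ^ (-K) + Real.exp (-m)) * (BBG n m d₁ d₂).card := by
  have hnm : n ≤ m := Nat.le_of_mul_le_mul_right
    (hnd.trans_le (Nat.mul_le_mul_left m hdd)) hd₁
  obtain rfl | hd₂ := (Nat.succ_le_iff.2 hd₂).eq_or_lt'
  · rw [Finset.filter_false_of_mem fun X hX => not_not_intro ?_]
    · simp only [Finset.card_empty, Nat.cast_zero]
      positivity
    have star := IsBiregular.centredFormLE_sqrt (by simpa using mem_BBG_iff.1 hX) (biadj_nonneg X)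
      (Nat.cast_pos.2 hd₁)
    exact (secondEigenvalueLE_of_centredFormLE hn hm hd₁ hX (Real.sqrt_nonneg _) star).mono
      (le_mul_of_one_le_left (Real.sqrt_nonneg _) (one_le_eigenvalueConst hK))
  · exact card_not_secondEigenvalueLE_le_of_two_le hn hnm hd₁ hd₂ hnd hcube hK

end UnionBound

theorem second_eigenvalue_bound :
    ∀ K : ℝ, 0 < K → ∃ α : ℝ, 0 < α ∧
      ∀ (n m d₁ d₂ : ℕ), 0 < n → 0 < m → 0 < d₁ → 0 < d₂ →
        n * d₁ = m * d₂ → d₂ ≤ d₁ →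
        (d₂ : ℝ) ≤ (1 / 2) * (n : ℝ) ^ ((2 : ℝ) / 3) →
        (BBG n m d₁ d₂).Nonempty →
        (1 : ℝ) - (m : ℝ) ^ (-K) - Real.exp (-(m : ℝ)) ≤
          (((BBG n m d₁ d₂).filter fun X =>
              ∀ (hA : (adj X).IsHermitian)
                (σ : Fin (n + m) ≃ (Fin n ⊕ Fin m)),
                Antitone (fun i => hA.eigenvalues (σ i)) →
                ∀ i : Fin (n + m), (i : ℕ) = 1 →
                  hA.eigenvalues (σ i) ≤ α * Real.sqrt d₁).card : ℝ) /
            ((BBG n m d₁ d₂).card : ℝ) := by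
  intro K hK
  refine ⟨eigenvalueConst K, zero_lt_one.trans_le (one_le_eigenvalueConst hK.le), ?_⟩
  intro n m d₁ d₂ hn hm hd₁ hd₂ hnd hdd hdn hne
  have bad := card_not_secondEigenvalueLE_le hn hm hd₁ hd₂ hnd hdd (eight_mul_cube_le_sq hdn) hK.le
  have total := Finset.card_filter_add_card_filter_not (s := BBG n m d₁ d₂)
    fun X => SecondEigenvalueLE X (eigenvalueConst K * √d₁)
  rw [← Nat.cast_inj (R := ℝ), Nat.cast_add] at total
  rw [le_div_iff₀ (Nat.cast_pos.2 hne.card_pos)]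
  calc _ ≤ (((BBG n m d₁ d₂).filter fun X =>
        SecondEigenvalueLE X (eigenvalueConst K * √d₁)).card : ℝ) := by linarith
    _ = _ := by congr
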